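/- arXiv:math/0308045 — 2 statements merged into one kernel-verified Lean document; each statement's English description precedes it below -/
import Mathlib

section
/- Let P be an induced-hereditary graph property. Then P has a unique factorisation if and only if one of the following holds: (1) P is irreducible; (2) P = O(r)∘O(s) for some 1 ≤ r,s ≤ ∞; (3) P = K(r)∘K(s) for some 1 ≤ r,s ≤ ∞; (4) P = O(r)∘K(s) for some finite r,s ≥ 1. -/
attribute [local instance] Classical.propDecidable

open SimpleGraph

/-- A finite simple graph, bundled. -/
structure FGraph : Type 1 where
  V : Type
  [fin : Fintype V]
  graph : SimpleGraph V

attribute [instance] FGraph.fin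

namespace FGraph

/-- `G.IsInduced H` : `G` is isomorphic to an induced subgraph of `H`. -/
def IsInduced (G H : FGraph) : Prop := Nonempty (G.graph ↪g H.graph)

/-- `G.IsSub H` : `G` is isomorphic to a subgraph of `H`. -/
def IsSub (G H : FGraph) : Prop := ∃ f : G.graph →g H.graph, Function.Injective f

/-- `G.Iso H` : `G` and `H` are isomorphic. -/
def Iso (G H : FGraph) : Prop := Nonempty (G.graph ≃g H.graph)

/-- The induced subgraph of `G` on a set `s` of vertices. -/
noncomputable def induce (G : FGraph) (s : Set G.V) : FGraph := ⟨↥s, G.graph.induce s⟩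

end FGraph

/-- A class of finite graphs. -/
abbrev GProp : Type 1 := FGraph → Prop

/-- A graph property: a nonempty isomorphism-closed class of finite graphs,
each having at least one vertex. -/
structure IsGProp (P : GProp) : Prop where
  nonempty : ∃ G, P G
  vertexNonempty : ∀ G, P G → Nonempty G.V
  isoClosed : ∀ G H, G.Iso H → P G → P H

namespace GProp

/-- The product `P ∘ Q` of two classes of graphs. -/
def prod (P Q : GProp) : GProp := fun G =>
  Nonempty G.V ∧ ∃ s : Set G.V,
    (s.Nonempty → P (G.induce s)) ∧ ((sᶜ : Set G.V).Nonempty → Q (G.induce (sᶜ : Set G.V)))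

/-- The product `∏ i, Ps i` of an indexed family of classes of graphs:
the vertex set is partitioned into the (possibly empty) preimages of a map
to the index set, and every nonempty part must induce a graph in the
corresponding class. -/
def iProd {I : Type*} (Ps : I → GProp) : GProp := fun G =>
  Nonempty G.V ∧ ∃ f : G.V → I,
    ∀ i, (f ⁻¹' {i}).Nonempty → Ps i (G.induce (f ⁻¹' {i}))

end GProp

/-- Closed under induced subgraphs with at least one vertex. -/
def IndHereditary (P : GProp) : Prop :=
  ∀ G H : FGraph, P G → H.IsInduced G → Nonempty H.V → P H

/-- Closed under subgraphs with at least one vertex. -/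
def Hereditary (P : GProp) : Prop :=
  ∀ G H : FGraph, P G → H.IsSub G → Nonempty H.V → P H

/-- Closed under induced supergraphs. -/
def GeqHereditary (P : GProp) : Prop :=
  ∀ G H : FGraph, P H → H.IsInduced G → P G


/-- `O(r)`: edgeless graphs on at least one and at most `r` vertices
(`r = ⊤` means all finite edgeless graphs). -/
def Oprop (r : ℕ∞) : GProp := fun G =>
  Nonempty G.V ∧ G.graph = ⊥ ∧ (Fintype.card G.V : ℕ∞) ≤ r

/-- `K(r)`: complete graphs on at least one and at most `r` vertices
(`r = ⊤` means all finite complete graphs). -/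
def Kprop (r : ℕ∞) : GProp := fun G =>
  Nonempty G.V ∧ G.graph = ⊤ ∧ (Fintype.card G.V : ℕ∞) ≤ r

/-- `P` is irreducible: it is not a product of two graph properties both
different from `P`. -/
def IrreducibleProp (P : GProp) : Prop :=
  ¬ ∃ Q₁ Q₂ : GProp, IsGProp Q₁ ∧ IsGProp Q₂ ∧ Q₁ ≠ P ∧ Q₂ ≠ P ∧ P = GProp.prod Q₁ Q₂

/-- `P` has a unique factorisation: there is at most one unordered pair
`{Q₁, Q₂}` of graph properties, both different from `P`, with `P = Q₁ ∘ Q₂`. -/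
def HasUniqueFactorisation (P : GProp) : Prop :=
  ∀ Q₁ Q₂ R₁ R₂ : GProp, IsGProp Q₁ → IsGProp Q₂ → IsGProp R₁ → IsGProp R₂ →
    Q₁ ≠ P → Q₂ ≠ P → R₁ ≠ P → R₂ ≠ P →
    P = GProp.prod Q₁ Q₂ → P = GProp.prod R₁ R₂ →
    (Q₁ = R₁ ∧ Q₂ = R₂) ∨ (Q₁ = R₂ ∧ Q₂ = R₁)

namespace UF

/-- `F` restricted to `s` is an induced embedding of `G[s]` in `A`. -/
def Emb (G A : FGraph) (s : Set G.V) (F : G.V → A.V) : Prop :=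
  ∀ u ∈ s, ∀ v ∈ s, (F u = F v → u = v) ∧ (A.graph.Adj (F u) (F v) ↔ G.graph.Adj u v)

lemma of_equiv {Q : GProp} (hQ : IsGProp Q) {A : FGraph} (hA : Q A) (G : FGraph) (s : Set G.V)
    (e : A.V → G.V) (hi : Function.Injective e) (ha : ∀ a b, G.graph.Adj (e a) (e b) ↔ A.graph.Adj a b)
    (hr : Set.range e = s) : Q (G.induce s) := by
  subst hr
  refine hQ.isoClosed A _ ⟨⟨Equiv.ofInjective e hi, ?_⟩⟩ hA
  intro a b
  exact ha a b

lemma of_emb {Q : GProp} (hQ : IndHereditary Q) {A : FGraph} (hA : Q A) (G : FGraph) (s : Set G.V)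
    (hs : s.Nonempty) (F : G.V → A.V) (hF : Emb G A s F) : Q (G.induce s) := by
  refine hQ A _ hA ⟨⟨⟨fun x => F x.1, ?_⟩, ?_⟩⟩ hs.to_subtype
  · intro a b h
    exact Subtype.ext ((hF a.1 a.2 b.1 b.2).1 h)
  · intro a b
    exact (hF a.1 a.2 b.1 b.2).2

lemma emb_of_induced {G A : FGraph} {s : Set G.V} (hA : Nonempty A.V)
    (h : (G.induce s).IsInduced A) : ∃ F, Emb G A s F := by
  obtain ⟨f⟩ := h
  refine ⟨fun u => if h : u ∈ s then f ⟨u, h⟩ else hA.some, ?_⟩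
  intro u hu v hv
  simp only [hu, hv, dif_pos]
  refine ⟨fun h => ?_, ?_⟩
  · have := f.injective h
    exact congrArg Subtype.val this
  · exact f.map_adj_iff (v := ⟨u, hu⟩) (w := ⟨v, hv⟩)

lemma induce_mono {G : FGraph} {s t : Set G.V} (h : s ⊆ t) : (G.induce s).IsInduced (G.induce t) :=
  ⟨⟨⟨fun x => ⟨x.1, h x.2⟩, fun _ _ h => Subtype.ext (congrArg (fun z : t => z.1) h)⟩, Iff.rfl⟩⟩

lemma induce_univ_iso (G : FGraph) : (G.induce Set.univ).Iso G :=
  ⟨⟨Equiv.Set.univ _, Iff.rfl⟩⟩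

lemma iso_symm {G H : FGraph} (h : G.Iso H) : H.Iso G := by
  obtain ⟨e⟩ := h
  exact ⟨e.symm⟩

/-- gluing -/
def glueGraph (G A B : FGraph) (s : Set G.V) (F : G.V → A.V) (H : G.V → B.V) :
    SimpleGraph (A.V ⊕ B.V) where
  Adj
    | .inl a, .inl a' => A.graph.Adj a a'
    | .inr b, .inr b' => B.graph.Adj b b'
    | .inl a, .inr b => ∃ u ∈ s, ∃ v ∈ sᶜ, F u = a ∧ H v = b ∧ G.graph.Adj u v
    | .inr b, .inl a => ∃ u ∈ s, ∃ v ∈ sᶜ, F u = a ∧ H v = b ∧ G.graph.Adj u v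
  symm := ⟨by
    rintro (a | a) (b | b) h
    · exact A.graph.adj_symm h
    · exact h
    · exact h
    · exact B.graph.adj_symm h⟩
  loopless := ⟨by
    rintro (a | a) h
    · exact A.graph.loopless.irrefl _ h
    · exact B.graph.loopless.irrefl _ h⟩

lemma glue {P Q₁ Q₂ : GProp} (hind : IndHereditary P) (h₁ : IsGProp Q₁) (h₂ : IsGProp Q₂)
    (hP : P = GProp.prod Q₁ Q₂) {A B : FGraph} (hA : Q₁ A) (hB : Q₂ B) (G : FGraph) (hG : Nonempty G.V)
    (s : Set G.V) (F : G.V → A.V) (H : G.V → B.V) (hF : Emb G A s F) (hH : Emb G B sᶜ H) : P G := by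
  have hW : P ⟨A.V ⊕ B.V, glueGraph G A B s F H⟩ := by
    rw [hP]
    obtain ⟨a⟩ := h₁.vertexNonempty A hA
    refine ⟨⟨Sum.inl a⟩, Set.range Sum.inl, fun _ => ?_, fun _ => ?_⟩
    · exact of_equiv h₁ hA _ _ Sum.inl Sum.inl_injective (fun _ _ => Iff.rfl) rfl
    · refine of_equiv h₂ hB _ _ Sum.inr Sum.inr_injective (fun _ _ => Iff.rfl) ?_
      exact Set.compl_range_inl.symm
  refine hind _ G hW ⟨⟨⟨fun u => if u ∈ s then Sum.inl (F u) else Sum.inr (H u), ?_⟩, ?_⟩⟩ hG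
  · intro u v h
    by_cases hu : u ∈ s <;> by_cases hv : v ∈ s <;> simp [hu, hv] at h
    · exact (hF u hu v hv).1 h
    · exact (hH u hu v hv).1 h
  · intro u v
    change (glueGraph G A B s F H).Adj (if u ∈ s then Sum.inl (F u) else Sum.inr (H u))
      (if v ∈ s then Sum.inl (F v) else Sum.inr (H v)) ↔ G.graph.Adj u v
    by_cases hu : u ∈ s <;> by_cases hv : v ∈ s <;> simp only [hu, hv, if_true, if_false]
    · exact (hF u hu v hv).2
    · constructor
      · rintro ⟨u', hu', v', hv', e1, e2, h⟩
        rw [← (hF u' hu' u hu).1 e1, ← (hH v' hv' v hv).1 e2]; exact h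
      · intro h
        exact ⟨u, hu, v, hv, rfl, rfl, h⟩
    · constructor
      · rintro ⟨u', hu', v', hv', e1, e2, h⟩
        rw [← (hF u' hu' v hv).1 e1, ← (hH v' hv' u hu).1 e2]; exact h.symm
      · intro h
        exact ⟨v, hv, u, hu, rfl, rfl, h.symm⟩
    · exact (hH u hu v hv).2

/-- Downward closure. -/
def D (Q : GProp) : GProp := fun H => Nonempty H.V ∧ ∃ G, Q G ∧ H.IsInduced G

lemma D_sub {Q : GProp} (hQ : IsGProp Q) {G} (h : Q G) : D Q G :=
  ⟨hQ.vertexNonempty _ h, G, h, ⟨RelEmbedding.refl _⟩⟩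

lemma D_her (Q : GProp) : IndHereditary (D Q) := by
  rintro G H ⟨_, A, hA, ⟨f⟩⟩ ⟨g⟩ hH
  exact ⟨hH, A, hA, ⟨f.comp g⟩⟩

lemma her_gprop {Q : GProp} (h : IndHereditary Q) (hn : ∃ G, Q G)
    (hv : ∀ G, Q G → Nonempty G.V) : IsGProp Q :=
  ⟨hn, hv, fun G H ⟨e⟩ hG => h G H hG ⟨e.symm.toRelEmbedding⟩ ((hv G hG).map e)⟩

lemma D_gprop {Q : GProp} (hQ : IsGProp Q) : IsGProp (D Q) :=
  her_gprop (D_her Q) (hQ.nonempty.imp fun _ => D_sub hQ) fun _ h => h.1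

lemma emb_empty (G A : FGraph) (F : G.V → A.V) : Emb G A ∅ F := fun _ h => h.elim

lemma D_prod {P Q₁ Q₂ : GProp} (hind : IndHereditary P) (h₁ : IsGProp Q₁) (h₂ : IsGProp Q₂)
    (hP : P = GProp.prod Q₁ Q₂) : P = GProp.prod (D Q₁) (D Q₂) := by
  have key : ∀ {Q : GProp} (hQ : IsGProp Q) (G : FGraph) (s : Set G.V)
      (h : s.Nonempty → D Q (G.induce s)), ∃ A, Q A ∧ ∃ F, Emb G A s F := by
    intro Q hQ G s h
    rcases s.eq_empty_or_nonempty with rfl | hs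
    · obtain ⟨A, hA⟩ := hQ.nonempty
      obtain ⟨a⟩ := hQ.vertexNonempty A hA
      exact ⟨A, hA, fun _ => a, emb_empty _ _ _⟩
    · obtain ⟨_, A, hA, hi⟩ := h hs
      exact ⟨A, hA, emb_of_induced (hQ.vertexNonempty A hA) hi⟩
  funext G
  apply propext
  constructor
  · intro h
    rw [hP] at h
    obtain ⟨hn, s, hs, hs'⟩ := h
    exact ⟨hn, s, fun h => D_sub h₁ (hs h), fun h => D_sub h₂ (hs' h)⟩
  · rintro ⟨hn, s, hs, hs'⟩
    obtain ⟨A, hA, F, hF⟩ := key h₁ G s hs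
    obtain ⟨B, hB, H, hH⟩ := key h₂ G _ hs'
    exact glue hind h₁ h₂ hP hA hB G hn s F H hF hH

lemma prod_comm (Q₁ Q₂ : GProp) : GProp.prod Q₁ Q₂ = GProp.prod Q₂ Q₁ := by
  have : ∀ Q₁ Q₂ G, GProp.prod Q₁ Q₂ G → GProp.prod Q₂ Q₁ G := by
    rintro Q₁ Q₂ G ⟨hn, s, hs, hs'⟩
    exact ⟨hn, sᶜ, hs', by rwa [compl_compl]⟩
  funext G
  exact propext ⟨this _ _ _, this _ _ _⟩

lemma single {Q : GProp} (hQ : IndHereditary Q) (hg : IsGProp Q) (G : FGraph) (hn : Nonempty G.V)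
    (hs : Subsingleton G.V) : Q G := by
  obtain ⟨A, hA⟩ := hg.nonempty
  obtain ⟨a⟩ := hg.vertexNonempty A hA
  refine hQ A G hA ⟨⟨⟨fun _ => a, fun _ _ _ => Subsingleton.elim _ _⟩, ?_⟩⟩ hn
  intro u v
  rw [Subsingleton.elim u v]
  simp

lemma left_sub {Q₁ Q₂ : GProp} (h₁ : IsGProp Q₁) {G} (h : Q₁ G) : GProp.prod Q₁ Q₂ G :=
  ⟨h₁.vertexNonempty _ h, Set.univ, fun _ => h₁.isoClosed _ _ (iso_symm (induce_univ_iso G)) h,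
    fun h => by simp at h⟩

lemma right_sub {Q₁ Q₂ : GProp} (h₂ : IsGProp Q₂) {G} (h : Q₂ G) : GProp.prod Q₁ Q₂ G := by
  rw [prod_comm]; exact left_sub h₂ h

/-! ### complements -/

def cG (G : FGraph) : FGraph := ⟨G.V, G.graphᶜ⟩

lemma cG_cG (G : FGraph) : cG (cG G) = G := by
  cases G with
  | mk V g =>
    change FGraph.mk V gᶜᶜ = FGraph.mk V g
    rw [compl_compl]

lemma cG_induce (G : FGraph) (s : Set G.V) :
    cG (G.induce s) = (cG G).induce (show Set (cG G).V from s) := by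
  unfold cG FGraph.induce
  congr 1
  ext a b
  simp [SimpleGraph.compl_adj, Subtype.ext_iff]

def cP (P : GProp) : GProp := fun G => P (cG G)

lemma cP_cP (P : GProp) : cP (cP P) = P := by
  funext G
  simp [cP, cG_cG]

lemma cP_prod (P Q : GProp) : cP (GProp.prod P Q) = GProp.prod (cP P) (cP Q) := by
  funext G
  unfold cP GProp.prod
  simp only [cG_induce]
  rfl

lemma cP_inj {P Q : GProp} : cP P = cP Q ↔ P = Q :=
  ⟨fun h => by rw [← cP_cP P, h, cP_cP], fun h => by rw [h]⟩

lemma cG_iso {G H : FGraph} (h : G.Iso H) : (cG G).Iso (cG H) := by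
  obtain ⟨e⟩ := h
  refine ⟨⟨e.toEquiv, ?_⟩⟩
  intro (a : G.V) (b : G.V)
  change H.graphᶜ.Adj (e a) (e b) ↔ G.graphᶜ.Adj a b
  simp [SimpleGraph.compl_adj, e.map_adj_iff]

lemma cP_gprop {P : GProp} (h : IsGProp P) : IsGProp (cP P) := by
  refine ⟨?_, fun G hG => h.vertexNonempty (cG G) hG, fun G H e hG => h.isoClosed _ _ (cG_iso e) hG⟩
  obtain ⟨G, hG⟩ := h.nonempty
  exact ⟨cG G, by unfold cP; rwa [cG_cG]⟩

lemma cP_her {P : GProp} (h : IndHereditary P) : IndHereditary (cP P) := by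
  rintro G H hG ⟨e⟩ hn
  refine h _ _ hG ⟨⟨e.toEmbedding, ?_⟩⟩ hn
  intro (a : H.V) (b : H.V)
  change G.graphᶜ.Adj (e a) (e b) ↔ H.graphᶜ.Adj a b
  simp [SimpleGraph.compl_adj, e.map_adj_iff]

lemma cP_O (r : ℕ∞) : cP (Oprop r) = Kprop r := by
  funext G
  change (Nonempty G.V ∧ G.graphᶜ = ⊥ ∧ (Fintype.card G.V : ℕ∞) ≤ r) = 
    (Nonempty G.V ∧ G.graph = ⊤ ∧ (Fintype.card G.V : ℕ∞) ≤ r)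
  rw [compl_eq_bot]

lemma cP_K (r : ℕ∞) : cP (Kprop r) = Oprop r := by
  rw [← cP_O, cP_cP]

lemma cP_ne {P Q : GProp} : cP P ≠ Q ↔ P ≠ cP Q := by
  rw [not_iff_not]
  exact ⟨fun h => by rw [← h, cP_cP], fun h => by rw [h, cP_cP]⟩

lemma cP_huf {P : GProp} (h : HasUniqueFactorisation P) : HasUniqueFactorisation (cP P) := by
  intro Q₁ Q₂ R₁ R₂ a b c d e f g i hQ hR
  have := h (cP Q₁) (cP Q₂) (cP R₁) (cP R₂) (cP_gprop a) (cP_gprop b) (cP_gprop c) (cP_gprop d)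
    (cP_ne.2 e) (cP_ne.2 f) (cP_ne.2 g) (cP_ne.2 i) (by rw [← cP_prod, ← hQ, cP_cP])
    (by rw [← cP_prod, ← hR, cP_cP])
  simpa only [cP_inj] using this

/-! ### O and K are hereditary -/

lemma O_her (r : ℕ∞) : IndHereditary (Oprop r) := by
  rintro G H ⟨_, h, hc⟩ ⟨e⟩ hn
  refine ⟨hn, ?_, le_trans (by exact_mod_cast Fintype.card_le_of_injective e e.injective) hc⟩
  ext a b
  have h2 : ∀ x y, ¬ G.graph.Adj x y := by rw [h]; simp
  rw [← e.map_adj_iff]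
  exact iff_of_false (h2 _ _) (by simp)

lemma K_her (r : ℕ∞) : IndHereditary (Kprop r) := by
  rw [← cP_O]; exact cP_her (O_her r)

lemma O_gprop {r : ℕ∞} (hr : 1 ≤ r) : IsGProp (Oprop r) :=
  her_gprop (O_her r) ⟨⟨Fin 1, ⊥⟩, ⟨0⟩, rfl, by simpa using hr⟩ fun _ h => h.1

lemma K_gprop {r : ℕ∞} (hr : 1 ≤ r) : IsGProp (Kprop r) := by
  rw [← cP_O]; exact cP_gprop (O_gprop hr)

lemma O_one : Oprop 1 = Kprop 1 := by
  funext G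
  apply propext
  unfold Oprop Kprop
  refine and_congr_right fun _ => and_congr_left fun h => ?_
  have : Subsingleton G.V := by
    rw [← Fintype.card_le_one_iff_subsingleton]; exact_mod_cast h
  constructor <;> intro _ <;> exact Subsingleton.elim _ _

lemma prod_her {Q₁ Q₂ : GProp} (h₁ : IndHereditary Q₁) (h₂ : IndHereditary Q₂) :
    IndHereditary (GProp.prod Q₁ Q₂) := by
  rintro G H ⟨_, s, hs, hs'⟩ ⟨e⟩ hn
  have key : ∀ (Q : GProp) (_ : IndHereditary Q) (t : Set G.V) (_ : t.Nonempty → Q (G.induce t)),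
      (e ⁻¹' t).Nonempty → Q (H.induce (e ⁻¹' t)) := by
    intro Q hQ t ht hne
    obtain ⟨x, hx⟩ := hne
    refine hQ _ _ (ht ⟨e x, hx⟩) ⟨⟨⟨fun y => ⟨e y.1, y.2⟩, ?_⟩, ?_⟩⟩ ⟨⟨x, hx⟩⟩
    · intro a b h
      exact Subtype.ext (e.injective (congrArg (fun z : t => z.1) h))
    · intro a b
      exact e.map_adj_iff
  exact ⟨hn, e ⁻¹' s, key _ h₁ _ hs, key _ h₂ _ hs'⟩

lemma prod_gprop {Q₁ Q₂ : GProp} (h₁ : IsGProp Q₁) (g₁ : IndHereditary Q₁) (g₂ : IndHereditary Q₂) :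
    IsGProp (GProp.prod Q₁ Q₂) :=
  her_gprop (prod_her g₁ g₂) (h₁.nonempty.imp fun _ => left_sub h₁) fun _ h => h.1

/-! ### edges and nonedges -/

def Edgeless (Q : GProp) : Prop := ∀ A, Q A → A.graph = ⊥
def Complete (Q : GProp) : Prop := ∀ A, Q A → A.graph = ⊤

lemma not_edgeless {Q : GProp} (h : ¬ Edgeless Q) : ∃ A, Q A ∧ ∃ x y, A.graph.Adj x y := by
  unfold Edgeless at h
  push Not at h
  obtain ⟨A, hA, h⟩ := h
  exact ⟨A, hA, SimpleGraph.ne_bot_iff_exists_adj.1 h⟩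

lemma not_complete {Q : GProp} (h : ¬ Complete Q) :
    ∃ A, Q A ∧ ∃ x y, x ≠ y ∧ ¬ A.graph.Adj x y := by
  unfold Complete at h
  push Not at h
  obtain ⟨A, hA, h⟩ := h
  exact ⟨A, hA, SimpleGraph.ne_top_iff_exists_not_adj.1 h⟩

lemma cP_complete {Q : GProp} : Complete (cP Q) ↔ Edgeless Q := by
  constructor
  · intro h A hA
    have := h (cG A) (by unfold cP; rwa [cG_cG])
    change A.graphᶜ = ⊤ at this
    rwa [compl_eq_top] at this
  · intro h A hA
    have := h _ hA
    change A.graphᶜ = ⊥ at this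
    rwa [compl_eq_bot] at this

lemma cP_edgeless {Q : GProp} : Edgeless (cP Q) ↔ Complete Q := by
  rw [← cP_complete, cP_cP]

lemma card_induce_compl {G : FGraph} (v : G.V) :
    Fintype.card (G.induce {v}ᶜ).V + 1 = Fintype.card G.V := by
  have h1 : Fintype.card (G.induce {v}ᶜ).V = Nat.card (({v}ᶜ : Set G.V)) :=
    (Nat.card_eq_fintype_card).symm
  rw [h1, Nat.card_coe_set_eq, Set.ncard_compl, Set.ncard_singleton, Nat.card_eq_fintype_card]
  have : 0 < Fintype.card G.V := Fintype.card_pos_iff.2 ⟨v⟩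
  omega

/-! ### the class of all graphs -/

lemma all_not_huf {P : GProp} (hall : ∀ G : FGraph, Nonempty G.V → P G)
    (hg : IsGProp P) : ¬ HasUniqueFactorisation P := by
  intro h
  let A : ℕ → GProp := fun n G => Nonempty G.V ∧ Fintype.card G.V ≠ n
  let B : GProp := fun G => Fintype.card G.V = 1
  have cardiso : ∀ {G H : FGraph}, G.Iso H → Fintype.card G.V = Fintype.card H.V := by
    rintro G H ⟨e⟩
    exact Fintype.card_congr e.toEquiv
  have hA : ∀ n, 2 ≤ n → IsGProp (A n) := by
    intro n hn
    refine ⟨⟨⟨Fin 1, ⊥⟩, ⟨0⟩, ?_⟩, fun G h => h.1, ?_⟩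
    · simp; omega
    · rintro G H e ⟨h1, h2⟩
      refine ⟨?_, by rwa [← cardiso e]⟩
      obtain ⟨e⟩ := e
      exact h1.map e
  have hB : IsGProp B := by
    refine ⟨⟨⟨Fin 1, ⊥⟩, by simp [B]⟩, fun G h => ?_, ?_⟩
    · exact Fintype.card_pos_iff.1 (by rw [h]; norm_num)
    · intro G H e h
      exact (cardiso e).symm.trans h
  have hAP : ∀ n, 2 ≤ n → A n ≠ P := by
    intro n hn hE
    have : A n ⟨Fin n, ⊥⟩ := by
      rw [hE]; exact hall _ ⟨⟨0, by omega⟩⟩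
    exact this.2 (by simp)
  have hBP : B ≠ P := by
    intro hE
    have : B ⟨Fin 2, ⊥⟩ := by
      rw [hE]; exact hall _ ⟨0⟩
    simp [B] at this
  have hprod : ∀ n, 2 ≤ n → P = GProp.prod (A n) B := by
    intro n hn
    funext G
    apply propext
    constructor
    · intro hG
      have hne := hg.vertexNonempty G hG
      by_cases hc : Fintype.card G.V = n
      · obtain ⟨v⟩ := hne
        refine ⟨⟨v⟩, {v}ᶜ, ?_, ?_⟩
        · intro hh
          refine ⟨hh.to_subtype, ?_⟩
          have := card_induce_compl v
          omega
        · intro _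
          rw [compl_compl]
          change Fintype.card (G.induce {v}).V = 1
          rw [Fintype.card_eq_one_iff]
          exact ⟨⟨v, rfl⟩, fun y => Subtype.ext y.2⟩
      · exact left_sub (hA n hn) ⟨hne, hc⟩
    · intro h
      exact hall _ h.1
  have h23 : A 2 = A 3 := by
    rcases h (A 2) B (A 3) B (hA 2 le_rfl) hB (hA 3 (by omega)) hB (hAP 2 le_rfl) hBP
      (hAP 3 (by omega)) hBP (hprod 2 le_rfl) (hprod 3 (by omega)) with h | h
    · exact h.1
    · exact h.1.trans h.2
  have : A 3 ⟨Fin 2, ⊥⟩ := ⟨⟨0⟩, by simp⟩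
  rw [← h23] at this
  exact this.2 (by simp)

lemma all_of_absorb {P R : GProp} (hR : IndHereditary R)
    (hgR : IsGProp R) (h : P = GProp.prod P R) : ∀ G : FGraph, Nonempty G.V → P G := by
  have : ∀ n, ∀ G : FGraph, Nonempty G.V → Fintype.card G.V = n → P G := by
    intro n
    induction n with
    | zero =>
      intro G hn hc
      exact absurd (Fintype.card_pos_iff.2 hn) (by omega)
    | succ n ih =>
      intro G hn hc
      rw [h]
      obtain ⟨v⟩ := hn
      refine ⟨⟨v⟩, {v}ᶜ, fun hh => ih _ hh.to_subtype ?_, fun hh => ?_⟩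
      · have := card_induce_compl v
        omega
      · rw [compl_compl]
        exact single hR hgR _ ⟨⟨v, rfl⟩⟩ (inferInstanceAs (Subsingleton ({v} : Set G.V)))
  exact fun G hn => this _ G hn rfl

/-! ### forward direction -/

lemma huf_false {P A A' B : GProp} (h : HasUniqueFactorisation P) (gA : IsGProp A) (gA' : IsGProp A')
    (gB : IsGProp B) (hA : A ≠ P) (hA' : A' ≠ P) (hB : B ≠ P) (h1 : P = GProp.prod A B)
    (h2 : P = GProp.prod A' B) : A = A' := by
  rcases h A B A' B gA gB gA' gB hA hB hA' hB h1 h2 with h | h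
  · exact h.1
  · exact h.1.trans h.2

/-- Remove the one-vertex graph. -/
def rem (Q : GProp) : GProp := fun G => Q G ∧ Nontrivial G.V

lemma rem_gprop {Q : GProp} (hQ : IsGProp Q) (h : ∃ G, Q G ∧ Nontrivial G.V) : IsGProp (rem Q) := by
  refine ⟨h, fun G h => hQ.vertexNonempty _ h.1, ?_⟩
  rintro G H e ⟨h1, h2⟩
  refine ⟨hQ.isoClosed _ _ e h1, ?_⟩
  obtain ⟨e⟩ := e
  exact e.symm.toEquiv.nontrivial

lemma rem_not {Q P : GProp} (hP : IndHereditary P) (hg : IsGProp P) : rem Q ≠ P := by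
  intro h
  have : rem Q ⟨Fin 1, ⊥⟩ := by
    rw [h]; exact single hP hg _ ⟨0⟩ (inferInstanceAs (Subsingleton (Fin 1)))
  exact not_subsingleton_iff_nontrivial.2 this.2 (inferInstanceAs (Subsingleton (Fin 1)))

lemma rem_prod_sub {Q₁ Q₂ : GProp} {G} (h : GProp.prod (rem Q₁) Q₂ G) : GProp.prod Q₁ Q₂ G := by
  obtain ⟨hn, s, h1, h2⟩ := h
  exact ⟨hn, s, fun h => (h1 h).1, h2⟩

lemma rem_case {s : Set α} : s = ∅ ∨ (∃ v, s = {v}) ∨ Nontrivial s := by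
  rcases s.eq_empty_or_nonempty with h | h
  · exact Or.inl h
  · rcases h.exists_eq_singleton_or_nontrivial with h | h
    · exact Or.inr (Or.inl h)
    · exact Or.inr (Or.inr h.coe_sort)

lemma pair_emb {Q : GProp} (hQ : IndHereditary Q) (h1 : ¬ Edgeless Q) (h2 : ¬ Complete Q)
    {G : FGraph} {v w : G.V} (hvw : v ≠ w) : Q (G.induce {v, w}) := by
  by_cases h : G.graph.Adj v w
  · obtain ⟨A, hA, x, y, hxy⟩ := not_edgeless h1
    refine of_emb hQ hA G _ ⟨v, by simp⟩ (fun u => if u = v then x else y) ?_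
    have := hxy.ne
    have := hxy.symm
    have := h.symm
    rintro a (rfl | rfl) b (rfl | rfl) <;> simp_all [Ne.symm]
  · obtain ⟨A, hA, x, y, hne, hxy⟩ := not_complete h2
    refine of_emb hQ hA G _ ⟨v, by simp⟩ (fun u => if u = v then x else y) ?_
    have : ¬ A.graph.Adj y x := fun h => hxy h.symm
    have : ¬ G.graph.Adj w v := fun h' => h h'.symm
    rintro a (rfl | rfl) b (rfl | rfl) <;> simp_all [Ne.symm]

lemma homog {P R₁ R₂ : GProp} (h : HasUniqueFactorisation P) (g₁ : IsGProp R₁) (g₂ : IsGProp R₂)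
    (i₁ : IndHereditary R₁) (i₂ : IndHereditary R₂) (n₁ : R₁ ≠ P) (n₂ : R₂ ≠ P)
    (hP : P = GProp.prod R₁ R₂) : Edgeless R₁ ∨ Complete R₁ := by
  by_contra hcon
  push Not at hcon
  obtain ⟨c1, c2⟩ := hcon
  have hPi : IndHereditary P := hP ▸ prod_her i₁ i₂
  have hPg : IsGProp P := hP ▸ prod_gprop g₁ i₁ i₂
  have hrem : IsGProp (rem R₁) := by
    refine rem_gprop g₁ ?_
    obtain ⟨A, hA, x, y, hxy⟩ := not_edgeless c1
    exact ⟨A, hA, x, y, hxy.ne⟩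
  refine rem_not i₁ g₁ (huf_false h g₁ hrem g₂ n₁ (rem_not hPi hPg) n₂ hP ?_).symm
  funext G
  apply propext
  constructor
  · intro hG
    rw [hP] at hG
    obtain ⟨hn, s, hs, hs'⟩ := hG
    rcases rem_case (s := s) with rfl | ⟨v, rfl⟩ | hnt
    · exact ⟨hn, ∅, fun h => by simp at h, hs'⟩
    · rcases ({v}ᶜ : Set G.V).eq_empty_or_nonempty with he | ⟨w, hw⟩
      · apply right_sub g₂
        refine single i₂ g₂ G hn ?_
        refine ⟨fun a b => ?_⟩
        have : ∀ a : G.V, a = v := by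
          intro a
          by_contra hh
          have : a ∈ ({v}ᶜ : Set G.V) := hh
          rw [he] at this
          exact this
        rw [this a, this b]
      · have hvw : v ≠ w := fun h => hw h.symm
        refine ⟨hn, {v, w}, fun _ => ⟨pair_emb i₁ c1 c2 hvw, ?_⟩, fun hh => ?_⟩
        · exact ⟨⟨v, by simp⟩, ⟨w, by simp⟩, fun h => hvw (congrArg (fun z : ({v, w} : Set G.V) => z.1) h)⟩
        · exact i₂ _ _ (hs' ⟨w, hw⟩) (induce_mono (by
            intro z hz hzv; exact hz (Or.inl hzv))) hh.to_subtype
    · exact ⟨hn, s, fun h => ⟨hs h, hnt⟩, hs'⟩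
  · intro hG
    rw [hP]; exact rem_prod_sub hG

lemma edgeless_eq {Q : GProp} (hg : IsGProp Q) (hi : IndHereditary Q) (h : Edgeless Q) :
    ∃ r : ℕ∞, 1 ≤ r ∧ Q = Oprop r := by
  have key : ∀ A : FGraph, Q A → ∀ G : FGraph, Nonempty G.V → G.graph = ⊥ →
      Fintype.card G.V ≤ Fintype.card A.V → Q G := by
    intro A hA G hn hG hc
    obtain ⟨f⟩ := Function.Embedding.nonempty_of_card_le hc
    refine hi A G hA ⟨⟨f, ?_⟩⟩ hn
    intro a b
    rw [h A hA, hG]; simp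
  by_cases hb : ∀ n, ∃ A, Q A ∧ n ≤ Fintype.card A.V
  · refine ⟨⊤, le_top, ?_⟩
    funext G
    apply propext
    constructor
    · intro hG
      exact ⟨hg.vertexNonempty _ hG, h _ hG, le_top⟩
    · rintro ⟨hn, hG, _⟩
      obtain ⟨A, hA, hc⟩ := hb (Fintype.card G.V)
      exact key A hA G hn hG hc
  · push Not at hb
    have hm := Nat.find_spec hb
    have hmin := fun m => Nat.find_min hb (m := m)
    generalize Nat.find hb = n at hm hmin
    obtain ⟨A₀, hA₀⟩ := hg.nonempty
    have hpos := Fintype.card_pos_iff.2 (hg.vertexNonempty _ hA₀)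
    have := hm A₀ hA₀
    have hm1 := hmin (n - 1) (by omega)
    push Not at hm1
    obtain ⟨A, hA, hAc⟩ := hm1
    refine ⟨((n - 1 : ℕ) : ℕ∞), by exact_mod_cast (by omega : 1 ≤ n - 1), ?_⟩
    funext G
    apply propext
    constructor
    · intro hG
      refine ⟨hg.vertexNonempty _ hG, h _ hG, ?_⟩
      have := hm G hG
      exact_mod_cast (by omega : Fintype.card G.V ≤ n - 1)
    · rintro ⟨hn, hG, hc⟩
      have hc' : Fintype.card G.V ≤ n - 1 := by exact_mod_cast hc
      exact key A hA G hn hG (hc'.trans hAc)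

lemma complete_eq {Q : GProp} (hg : IsGProp Q) (hi : IndHereditary Q) (h : Complete Q) :
    ∃ r : ℕ∞, 1 ≤ r ∧ Q = Kprop r := by
  obtain ⟨r, hr, h⟩ := edgeless_eq (cP_gprop hg) (cP_her hi) (cP_edgeless.2 h)
  exact ⟨r, hr, by rw [← cP_O, ← h, cP_cP]⟩

lemma OK_not_huf {s : ℕ∞} (hs : 2 ≤ s) :
    ¬ HasUniqueFactorisation (GProp.prod (Oprop ⊤) (Kprop s)) := by
  intro h
  have hs1 : 1 ≤ s := le_trans (by norm_num) hs
  have go := O_gprop (r := ⊤) le_top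
  have gk := K_gprop hs1
  have hK2 : Kprop s ⟨Fin 2, ⊤⟩ := ⟨⟨0⟩, rfl, by simpa using hs⟩
  have gr : IsGProp (rem (Kprop s)) := rem_gprop gk ⟨_, hK2, inferInstanceAs (Nontrivial (Fin 2))⟩
  have hPi := prod_her (O_her ⊤) (K_her s)
  have hPg := prod_gprop go (O_her ⊤) (K_her s)
  have nO : Oprop ⊤ ≠ GProp.prod (Oprop ⊤) (Kprop s) := by
    intro e
    have : Oprop ⊤ ⟨Fin 2, ⊤⟩ := by rw [e]; exact right_sub gk hK2
    exact absurd this.2.1 (by simp)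
  have hO2 : Oprop ⊤ ⟨Fin 2, ⊥⟩ := ⟨⟨0⟩, rfl, le_top⟩
  have nK : Kprop s ≠ GProp.prod (Oprop ⊤) (Kprop s) := by
    intro e
    have : Kprop s ⟨Fin 2, ⊥⟩ := by rw [e]; exact left_sub go hO2
    exact absurd this.2.1 (by simp)
  refine rem_not (K_her s) gk (huf_false h gk gr go nK (rem_not hPi hPg) nO (prod_comm _ _) ?_).symm
  funext G
  apply propext
  constructor
  · rintro ⟨hn, t, ht, ht'⟩
    rw [prod_comm]
    rcases rem_case (s := tᶜ) with he | ⟨b, hb⟩ | hnt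
    · exact ⟨hn, t, ht, fun h => by simp [he] at h⟩
    · have htb : ∀ x, x ∈ t ↔ x ≠ b := by
        intro x
        have : x ∈ tᶜ ↔ x = b := by rw [hb]; rfl
        rw [Ne, ← this]; simp
      have hnon : ∀ x ∈ t, ∀ y ∈ t, ¬ G.graph.Adj x y := by
        intro x hx y hy hxy
        have h1 := (ht ⟨x, hx⟩).2.1
        have h2 : (G.induce t).graph.Adj ⟨x, hx⟩ ⟨y, hy⟩ := hxy
        rw [h1] at h2
        exact h2
      by_cases hadj : ∃ a ∈ t, G.graph.Adj a b
      · obtain ⟨a, ha, hab⟩ := hadj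
        have hc : (t \ {a})ᶜ = {a, b} := by
          ext x
          have := htb x
          simp only [Set.mem_compl_iff, Set.mem_sdiff, Set.mem_singleton_iff, Set.mem_insert_iff]
          tauto
        refine ⟨hn, t \ {a}, fun hh => O_her ⊤ _ _ (ht ⟨a, ha⟩) (induce_mono Set.sdiff_subset) hh.to_subtype, fun _ => ?_⟩
        rw [hc]
        refine ⟨of_emb (K_her s) hK2 G _ ⟨a, by simp⟩ (fun u => if u = a then (0 : Fin 2) else (1 : Fin 2)) ?_, ?_⟩
        · have := hab.ne
          have := hab.symm
          rintro x (rfl | rfl) y (rfl | rfl) <;> simp_all [Ne.symm]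
        · exact ⟨⟨a, by simp⟩, ⟨b, by simp⟩, fun h => hab.ne (congrArg (fun z : ({a, b} : Set G.V) => z.1) h)⟩
      · refine left_sub go ⟨hn, ?_, le_top⟩
        push Not at hadj
        ext x y
        simp only [SimpleGraph.bot_adj, iff_false]
        intro hxy
        by_cases hx : x = b
        · subst hx
          exact hadj y ((htb y).2 hxy.ne') hxy.symm
        · by_cases hy : y = b
          · subst hy
            exact hadj x ((htb x).2 hx) hxy
          · exact hnon x ((htb x).2 hx) y ((htb y).2 hy) hxy
    · exact ⟨hn, t, ht, fun h => ⟨ht' h, hnt⟩⟩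
  · intro hG
    rw [prod_comm]
    exact rem_prod_sub hG

lemma OK_case {P : GProp} (h : HasUniqueFactorisation P) {r s : ℕ∞} (hr : 1 ≤ r) (hs : 1 ≤ s)
    (hP : P = GProp.prod (Oprop r) (Kprop s)) : 
       (∃ r s : ℕ∞, 1 ≤ r ∧ 1 ≤ s ∧ P = GProp.prod (Oprop r) (Oprop s)) ∨
       (∃ r s : ℕ∞, 1 ≤ r ∧ 1 ≤ s ∧ P = GProp.prod (Kprop r) (Kprop s)) ∨
       (∃ r s : ℕ, 1 ≤ r ∧ 1 ≤ s ∧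
          P = GProp.prod (Oprop (r : ℕ∞)) (Kprop (s : ℕ∞))) := by
  have two : ∀ {x : ℕ∞}, 1 ≤ x → x ≠ 1 → 2 ≤ x := by
    intro x h1 h2
    have := Order.add_one_le_of_lt (lt_of_le_of_ne h1 (Ne.symm h2))
    rwa [one_add_one_eq_two] at this
  by_cases hr1 : r = 1
  · right; left
    exact ⟨1, s, le_rfl, hs, by rw [hP, hr1, O_one]⟩
  by_cases hs1 : s = 1
  · left
    exact ⟨r, 1, hr, le_rfl, by rw [hP, hs1, O_one]⟩
  by_cases hrt : r = ⊤
  · subst hrt; subst hP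
    exact absurd h (OK_not_huf (two hs hs1))
  by_cases hst : s = ⊤
  · subst hst; subst hP
    have := cP_huf h
    rw [cP_prod, cP_O, cP_K, prod_comm] at this
    exact absurd this (OK_not_huf (two hr hr1))
  lift r to ℕ using hrt
  lift s to ℕ using hst
  right; right
  exact ⟨r, s, by exact_mod_cast hr, by exact_mod_cast hs, hP⟩

lemma forward {P : GProp} (hP : IsGProp P) (hind : IndHereditary P) (h : HasUniqueFactorisation P) :
    (IrreducibleProp P ∨
       (∃ r s : ℕ∞, 1 ≤ r ∧ 1 ≤ s ∧ P = GProp.prod (Oprop r) (Oprop s)) ∨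
       (∃ r s : ℕ∞, 1 ≤ r ∧ 1 ≤ s ∧ P = GProp.prod (Kprop r) (Kprop s)) ∨
       (∃ r s : ℕ, 1 ≤ r ∧ 1 ≤ s ∧
          P = GProp.prod (Oprop (r : ℕ∞)) (Kprop (s : ℕ∞)))) := by
  by_cases hirr : IrreducibleProp P
  · exact Or.inl hirr
  right
  unfold IrreducibleProp at hirr
  rw [not_not] at hirr
  obtain ⟨Q₁, Q₂, g₁, g₂, -, -, hQ⟩ := hirr
  have hD := D_prod hind g₁ g₂ hQ
  have d₁ := D_gprop g₁
  have d₂ := D_gprop g₂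
  have e₁ := D_her Q₁
  have e₂ := D_her Q₂
  generalize D Q₁ = R₁ at *
  generalize D Q₂ = R₂ at *
  have n₁ : R₁ ≠ P := by
    rintro rfl
    exact all_not_huf (all_of_absorb e₂ d₂ hD) hP h
  have n₂ : R₂ ≠ P := by
    rintro rfl
    exact all_not_huf (all_of_absorb e₁ d₁ (hD.trans (prod_comm _ _))) hP h
  have c₁ := homog h d₁ d₂ e₁ e₂ n₁ n₂ hD
  have c₂ := homog h d₂ d₁ e₂ e₁ n₂ n₁ (hD.trans (prod_comm _ _))
  rcases c₁ with c₁ | c₁ <;> rcases c₂ with c₂ | c₂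
  · obtain ⟨r, hr, rfl⟩ := edgeless_eq d₁ e₁ c₁
    obtain ⟨s, hs, rfl⟩ := edgeless_eq d₂ e₂ c₂
    exact Or.inl ⟨r, s, hr, hs, hD⟩
  · obtain ⟨r, hr, rfl⟩ := edgeless_eq d₁ e₁ c₁
    obtain ⟨s, hs, rfl⟩ := complete_eq d₂ e₂ c₂
    exact OK_case h hr hs hD
  · obtain ⟨r, hr, rfl⟩ := complete_eq d₁ e₁ c₁
    obtain ⟨s, hs, rfl⟩ := edgeless_eq d₂ e₂ c₂
    exact OK_case h hs hr (hD.trans (prod_comm _ _))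
  · obtain ⟨r, hr, rfl⟩ := complete_eq d₁ e₁ c₁
    obtain ⟨s, hs, rfl⟩ := complete_eq d₂ e₂ c₂
    exact Or.inr (Or.inl ⟨r, s, hr, hs, hD⟩)

/-! ### backward direction -/

def E (n : ℕ) : FGraph := ⟨Fin n, ⊥⟩

lemma edgeless_mem {Q : GProp} (hQ : IsGProp Q) {G H : FGraph} (h : Q G) (hG : G.graph = ⊥)
    (hH : H.graph = ⊥) (hc : Fintype.card G.V = Fintype.card H.V) : Q H := by
  refine hQ.isoClosed G H ⟨⟨Fintype.equivOfCardEq hc, ?_⟩⟩ h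
  intro a b
  rw [hG, hH]; simp

lemma eq_O {Q : GProp} (hQ : IsGProp Q) (he : Edgeless Q) (r : ℕ∞)
    (h : ∀ n : ℕ, 1 ≤ n → (Q (E n) ↔ (n : ℕ∞) ≤ r)) : Q = Oprop r := by
  funext G
  apply propext
  have hE : Fintype.card (E (Fintype.card G.V)).V = Fintype.card G.V :=
    Fintype.card_fin _
  constructor
  · intro hG
    have hn := hQ.vertexNonempty G hG
    refine ⟨hn, he _ hG, ?_⟩
    exact (h _ (Fintype.card_pos_iff.2 hn)).1 (edgeless_mem hQ hG (he _ hG) rfl hE.symm)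
  · rintro ⟨hn, hG, hc⟩
    exact edgeless_mem hQ ((h _ (Fintype.card_pos_iff.2 hn)).2 hc) rfl hG hE

lemma to_equiv {Q : GProp} (hQ : IsGProp Q) {A : FGraph} (G : FGraph) (s : Set G.V)
    (e : A.V → G.V) (hi : Function.Injective e) (ha : ∀ a b, G.graph.Adj (e a) (e b) ↔ A.graph.Adj a b)
    (hr : Set.range e = s) (h : Q (G.induce s)) : Q A := by
  subst hr
  refine hQ.isoClosed _ A (iso_symm ⟨⟨Equiv.ofInjective e hi, ?_⟩⟩) h
  intro a b
  exact ha a b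

lemma indep_of {Q : GProp} (he : Edgeless Q) {G : FGraph} {s : Set G.V}
    (h : s.Nonempty → Q (G.induce s)) : ∀ x ∈ s, ∀ y ∈ s, ¬ G.graph.Adj x y := by
  intro x hx y hy hxy
  have h1 := he _ (h ⟨x, hx⟩)
  have h2 : (G.induce s).graph.Adj ⟨x, hx⟩ ⟨y, hy⟩ := hxy
  rw [h1] at h2
  exact h2

lemma clique_of {Q : GProp} (he : Complete Q) {G : FGraph} {s : Set G.V}
    (h : s.Nonempty → Q (G.induce s)) : ∀ x ∈ s, ∀ y ∈ s, x ≠ y → G.graph.Adj x y := by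
  intro x hx y hy hxy
  have h1 := he _ (h ⟨x, hx⟩)
  have h2 : (G.induce s).graph.Adj ⟨x, hx⟩ ⟨y, hy⟩ := by
    rw [h1]
    exact fun h => hxy (congrArg (fun z : s => z.1) h)
  exact h2

def bip (i j : ℕ) : FGraph := ⟨Fin i ⊕ Fin j, completeBipartiteGraph (Fin i) (Fin j)⟩

lemma bip_aux {X Y : GProp} (gX : IsGProp X) (gY : IsGProp Y) (eX : Edgeless X) (eY : Edgeless Y)
    {i j : ℕ} (hj : 1 ≤ j) (s : Set (bip i j).V)
    (hX : s.Nonempty → X ((bip i j).induce s)) (hY : (sᶜ).Nonempty → Y ((bip i j).induce sᶜ))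
    (a : Fin i) (ha : (Sum.inl a : Fin i ⊕ Fin j) ∈ s) : X (E i) ∧ Y (E j) := by
  have iX := indep_of eX hX
  have iY := indep_of eY hY
  have h1 : ∀ b : Fin j, (Sum.inr b : Fin i ⊕ Fin j) ∈ sᶜ := by
    intro b hb
    exact iX _ ha _ hb (by simp [bip])
  have h2 : ∀ b : Fin i, (Sum.inl b : Fin i ⊕ Fin j) ∈ s := by
    intro b
    by_contra hb
    exact iY _ hb _ (h1 ⟨0, hj⟩) (by simp [bip])
  have hs : Set.range (Sum.inl : Fin i → Fin i ⊕ Fin j) = s := by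
    ext (x | x)
    · exact iff_of_true ⟨x, rfl⟩ (h2 x)
    · exact iff_of_false (by rintro ⟨y, hy⟩; cases hy) (h1 x)
  have hs' : Set.range (Sum.inr : Fin j → Fin i ⊕ Fin j) = sᶜ := by
    rw [← hs]; exact Set.compl_range_inl.symm
  constructor
  · exact to_equiv gX (A := E i) _ s Sum.inl Sum.inl_injective (by simp [bip, E]) hs (hX ⟨_, ha⟩)
  · exact to_equiv gY (A := E j) _ sᶜ Sum.inr Sum.inr_injective (by simp [bip, E]) hs'
      (hY ⟨_, h1 ⟨0, hj⟩⟩)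

lemma bip_of {X Y : GProp} (gX : IsGProp X) (gY : IsGProp Y) {i j : ℕ} (hi : 1 ≤ i)
    (hX : X (E i)) (hY : Y (E j)) : GProp.prod X Y (bip i j) := by
  refine ⟨⟨Sum.inl ⟨0, hi⟩⟩, Set.range Sum.inl, fun _ => ?_, fun _ => ?_⟩
  · exact of_equiv gX hX _ _ Sum.inl Sum.inl_injective (by simp [bip, E]) rfl
  · exact of_equiv gY hY _ _ Sum.inr Sum.inr_injective (by simp [bip, E]) Set.compl_range_inl.symm

lemma bip_iff {X Y : GProp} (gX : IsGProp X) (gY : IsGProp Y) (eX : Edgeless X) (eY : Edgeless Y)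
    {i j : ℕ} (hi : 1 ≤ i) (hj : 1 ≤ j) :
    GProp.prod X Y (bip i j) ↔ (X (E i) ∧ Y (E j)) ∨ (Y (E i) ∧ X (E j)) := by
  constructor
  · rintro ⟨_, s, hX, hY⟩
    by_cases h : (Sum.inl ⟨0, hi⟩ : Fin i ⊕ Fin j) ∈ s
    · exact Or.inl (bip_aux gX gY eX eY hj s hX hY _ h)
    · exact Or.inr (bip_aux gY gX eY eX hj sᶜ hY (by rwa [compl_compl]) _ h)
  · rintro (⟨h1, h2⟩ | ⟨h1, h2⟩)
    · exact bip_of gX gY hi h1 h2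
    · rw [prod_comm]
      exact bip_of gY gX hi h1 h2

lemma O_edgeless (r : ℕ∞) : Edgeless (Oprop r) := fun _ h => h.2.1
lemma K_complete (r : ℕ∞) : Complete (Kprop r) := fun _ h => h.2.1

lemma O_E {r : ℕ∞} {n : ℕ} (hn : 1 ≤ n) : Oprop r (E n) ↔ (n : ℕ∞) ≤ r := by
  have : Fintype.card (E n).V = n := Fintype.card_fin _
  unfold Oprop
  rw [this]
  exact ⟨fun h => h.2.2, fun h => ⟨⟨⟨0, hn⟩⟩, rfl, h⟩⟩

lemma OO_edgeless {r s : ℕ∞} {Q₁ Q₂ : GProp} (g₁ : IsGProp Q₁)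
    (g₂ : IsGProp Q₂) (h : GProp.prod (Oprop r) (Oprop s) = GProp.prod Q₁ Q₂) : Edgeless Q₁ := by
  by_contra hc
  obtain ⟨A, hA, x, y, hxy⟩ := not_edgeless hc
  obtain ⟨B, hB⟩ := g₂.nonempty
  obtain ⟨b⟩ := g₂.vertexNonempty B hB
  have hyx := hxy.symm
  have hne := hxy.ne
  have : GProp.prod (Oprop r) (Oprop s) ⟨Fin 3, ⊤⟩ := by
    refine glue (prod_her (O_her r) (O_her s)) g₁ g₂ h hA hB _ ⟨0⟩
      {u : Fin 3 | u ≠ 2} ![x, y, y] (fun _ => b) ?_ ?_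
    · intro (u : Fin 3) hu (v : Fin 3) hv
      fin_cases u <;> fin_cases v <;> simp_all [Ne.symm]
    · intro (u : Fin 3) hu (v : Fin 3) hv
      have hu : u = 2 := not_not.1 hu
      have hv : v = 2 := not_not.1 hv
      subst hu; subst hv
      simp
  obtain ⟨_, t, ht, ht'⟩ := this
  have i1 := indep_of (O_edgeless r) ht
  have i2 := indep_of (O_edgeless s) ht'
  have key : ∀ u v : Fin 3, u ≠ v → (u ∈ t ↔ v ∉ t) := by
    intro u v huv
    constructor
    · intro h1 h2
      exact i1 _ h1 _ h2 huv
    · intro h1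
      by_contra h2
      exact i2 _ h2 _ h1 huv
  have a := key 0 1 (by decide)
  have b := key 1 2 (by decide)
  have c := key 0 2 (by decide)
  tauto

lemma OO_uniq {r s : ℕ∞} (hr : 1 ≤ r) (hrs : r ≤ s) {Q₁ Q₂ : GProp} (g₁ : IsGProp Q₁)
    (g₂ : IsGProp Q₂) (h : GProp.prod (Oprop r) (Oprop s) = GProp.prod Q₁ Q₂) :
    (Q₁ = Oprop r ∧ Q₂ = Oprop s) ∨ (Q₁ = Oprop s ∧ Q₂ = Oprop r) := by
  have e₁ := OO_edgeless g₁ g₂ h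
  have e₂ := OO_edgeless g₂ g₁ (h.trans (prod_comm _ _))
  have hs := hr.trans hrs
  have key : ∀ i j : ℕ, 1 ≤ i → 1 ≤ j →
      ((Q₁ (E i) ∧ Q₂ (E j)) ∨ (Q₂ (E i) ∧ Q₁ (E j)) ↔
        ((i : ℕ∞) ≤ r ∧ (j : ℕ∞) ≤ s) ∨ ((i : ℕ∞) ≤ s ∧ (j : ℕ∞) ≤ r)) := by
    intro i j hi hj
    rw [← bip_iff g₁ g₂ e₁ e₂ hi hj, ← h, bip_iff (O_gprop hr) (O_gprop hs) (O_edgeless _) (O_edgeless _) hi hj,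
      O_E hi, O_E hi, O_E hj, O_E hj]
  have low : ∀ i : ℕ, 1 ≤ i → (i : ℕ∞) ≤ r → Q₁ (E i) ∧ Q₂ (E i) := by
    intro i hi hir
    have := (key i i hi hi).2 (Or.inl ⟨hir, hir.trans hrs⟩)
    tauto
  have hr1 : ((1 : ℕ) : ℕ∞) ≤ r := by simpa using hr
  have one := low 1 le_rfl hr1
  have mid : ∀ i : ℕ, 1 ≤ i → ((Q₁ (E i) ∨ Q₂ (E i)) ↔ (i : ℕ∞) ≤ s) := by
    intro i hi
    have := key i 1 hi le_rfl
    have hs1 := hr1.trans hrs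
    have : (i : ℕ∞) ≤ r → (i : ℕ∞) ≤ s := fun h => h.trans hrs
    tauto
  have excl : ∀ i j : ℕ, 1 ≤ i → 1 ≤ j → ¬ (i : ℕ∞) ≤ r → ¬ (j : ℕ∞) ≤ r → Q₁ (E i) → ¬ Q₂ (E j) := by
    intro i j hi hj h1 h2 h3 h4
    have := key i j hi hj
    tauto
  by_cases hc : ∃ i : ℕ, 1 ≤ i ∧ ¬ (i : ℕ∞) ≤ r ∧ Q₁ (E i)
  · right
    obtain ⟨i, hi, hir, hQi⟩ := hc
    have h2 : ∀ n : ℕ, 1 ≤ n → (Q₂ (E n) ↔ (n : ℕ∞) ≤ r) := by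
      intro n hn
      have := low n hn
      have := excl i n hi hn hir
      tauto
    refine ⟨eq_O g₁ e₁ s fun n hn => ?_, eq_O g₂ e₂ r h2⟩
    have := mid n hn
    have := h2 n hn
    have := low n hn
    tauto
  · left
    push Not at hc
    have h1 : ∀ n : ℕ, 1 ≤ n → (Q₁ (E n) ↔ (n : ℕ∞) ≤ r) := by
      intro n hn
      have := low n hn
      refine ⟨fun h => ?_, fun h => (this h).1⟩
      by_contra h'
      exact hc n hn (not_le.1 h') h
    refine ⟨eq_O g₁ e₁ r h1, eq_O g₂ e₂ s fun n hn => ?_⟩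
    have := mid n hn
    have := h1 n hn
    have := low n hn
    tauto

lemma huf_of {P A B : GProp} (h : ∀ Q₁ Q₂, IsGProp Q₁ → IsGProp Q₂ → P = GProp.prod Q₁ Q₂ →
    (Q₁ = A ∧ Q₂ = B) ∨ (Q₁ = B ∧ Q₂ = A)) : HasUniqueFactorisation P := by
  intro Q₁ Q₂ R₁ R₂ a b c d _ _ _ _ hQ hR
  rcases h Q₁ Q₂ a b hQ with ⟨rfl, rfl⟩ | ⟨rfl, rfl⟩ <;>
    rcases h R₁ R₂ c d hR with ⟨rfl, rfl⟩ | ⟨rfl, rfl⟩ <;> simp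

lemma OO_huf {r s : ℕ∞} (hr : 1 ≤ r) (hs : 1 ≤ s) :
    HasUniqueFactorisation (GProp.prod (Oprop r) (Oprop s)) := by
  rcases le_total r s with hrs | hrs
  · exact huf_of fun Q₁ Q₂ g₁ g₂ h => OO_uniq hr hrs g₁ g₂ h
  · rw [prod_comm]
    exact huf_of fun Q₁ Q₂ g₁ g₂ h => OO_uniq hs hrs g₁ g₂ h

lemma KK_huf {r s : ℕ∞} (hr : 1 ≤ r) (hs : 1 ≤ s) :
    HasUniqueFactorisation (GProp.prod (Kprop r) (Kprop s)) := by
  rw [← cP_O, ← cP_O, ← cP_prod]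
  exact cP_huf (OO_huf hr hs)

/-! ### O(r) ∘ K(s) -/

def C4 : FGraph := ⟨Fin 4, ⟨fun u v => (u.val + v.val) % 2 = 1,
  ⟨fun u v h => by rwa [add_comm]⟩, ⟨fun u h => by omega⟩⟩⟩

lemma C4_adj (u v : Fin 4) : C4.graph.Adj u v ↔ (u.val + v.val) % 2 = 1 := Iff.rfl

lemma C4_not {r s : ℕ∞} : ¬ GProp.prod (Oprop r) (Kprop s) C4 := by
  rintro ⟨_, t, ht, ht'⟩
  have i1 := indep_of (O_edgeless r) ht
  have i2 := clique_of (K_complete s) ht'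
  have key1 : ∀ u v : Fin 4, (u.val + v.val) % 2 = 1 → ¬ (u ∈ t ∧ v ∈ t) := by
    rintro u v huv ⟨h1, h2⟩
    exact i1 _ h1 _ h2 huv
  have key2 : ∀ u v : Fin 4, u ≠ v → ¬ (u.val + v.val) % 2 = 1 → u ∈ t ∨ v ∈ t := by
    intro u v hne huv
    by_contra! hh
    exact huv (i2 _ hh.1 _ hh.2 hne)
  have a := key1 0 1 (by decide)
  have b := key1 1 2 (by decide)
  have c := key1 2 3 (by decide)
  have d := key1 0 3 (by decide)
  have e := key2 0 2 (by decide) (by decide)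
  have f := key2 1 3 (by decide) (by decide)
  tauto

lemma cP_OK (r s : ℕ∞) : cP (GProp.prod (Oprop r) (Kprop s)) = GProp.prod (Oprop s) (Kprop r) := by
  rw [cP_prod, cP_O, cP_K, prod_comm]

lemma OK_her (r s : ℕ∞) : IndHereditary (GProp.prod (Oprop r) (Kprop s)) := prod_her (O_her r) (K_her s)

lemma OK_compl {r s : ℕ∞} {Q₁ Q₂ : GProp} (h : GProp.prod (Oprop r) (Kprop s) = GProp.prod Q₁ Q₂) :
    GProp.prod (Oprop s) (Kprop r) = GProp.prod (cP Q₁) (cP Q₂) := by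
  rw [← cP_prod, ← h, cP_OK]

lemma OK_complete {r s : ℕ∞} {Q₁ Q₂ : GProp} (g₁ : IsGProp Q₁) (g₂ : IsGProp Q₂)
    (h : GProp.prod (Oprop r) (Kprop s) = GProp.prod Q₁ Q₂) : Complete Q₁ ∨ Complete Q₂ := by
  by_contra! hc
  obtain ⟨A, hA, x, y, hne, hxy⟩ := not_complete hc.1
  obtain ⟨B, hB, x', y', hne', hxy'⟩ := not_complete hc.2
  have hyx : ¬ A.graph.Adj y x := fun h => hxy h.symm
  have hyx' : ¬ B.graph.Adj y' x' := fun h => hxy' h.symm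
  refine C4_not (glue (OK_her r s) g₁ g₂ h hA hB C4 ⟨(0 : Fin 4)⟩ {u : Fin 4 | u.val % 2 = 0}
    ![x, x, y, y] ![x', x', y', y'] ?_ ?_)
  · have key : ∀ u v : Fin 4, u.val % 2 = 0 → v.val % 2 = 0 →
        ((![x, x, y, y] : Fin 4 → A.V) u = (![x, x, y, y] : Fin 4 → A.V) v → u = v) ∧
        (A.graph.Adj ((![x, x, y, y] : Fin 4 → A.V) u) ((![x, x, y, y] : Fin 4 → A.V) v) ↔
          (u.val + v.val) % 2 = 1) := by
      intro u v hu hv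
      have := hne.symm
      fin_cases u <;> fin_cases v <;> simp_all
    exact fun u hu v hv => key u v hu hv
  · have key : ∀ u v : Fin 4, ¬ u.val % 2 = 0 → ¬ v.val % 2 = 0 →
        ((![x', x', y', y'] : Fin 4 → B.V) u = (![x', x', y', y'] : Fin 4 → B.V) v → u = v) ∧
        (B.graph.Adj ((![x', x', y', y'] : Fin 4 → B.V) u) ((![x', x', y', y'] : Fin 4 → B.V) v) ↔
          (u.val + v.val) % 2 = 1) := by
      intro u v hu hv
      have := hne'.symm
      fin_cases u <;> fin_cases v <;> simp_all
    exact fun u hu v hv => key u v hu hv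

lemma OK_edgeless {r s : ℕ∞} {Q₁ Q₂ : GProp} (g₁ : IsGProp Q₁) (g₂ : IsGProp Q₂)
    (h : GProp.prod (Oprop r) (Kprop s) = GProp.prod Q₁ Q₂) : Edgeless Q₁ ∨ Edgeless Q₂ := by
  have := OK_complete (cP_gprop g₁) (cP_gprop g₂) (OK_compl h)
  rwa [cP_complete, cP_complete] at this

lemma OK_noP3 {r s : ℕ∞} {Q₁ Q₂ : GProp} (g₁ : IsGProp Q₁) (g₂ : IsGProp Q₂)
    (h : GProp.prod (Oprop r) (Kprop s) = GProp.prod Q₁ Q₂) {B : FGraph} (hB : Q₁ B) (x y z : B.V)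
    (hxz : x ≠ z) (h1 : B.graph.Adj x y) (h2 : B.graph.Adj y z) (h3 : ¬ B.graph.Adj x z) : False := by
  obtain ⟨A, hA⟩ := g₂.nonempty
  obtain ⟨a⟩ := g₂.vertexNonempty A hA
  have h1' := h1.symm
  have h2' := h2.symm
  have h3' : ¬ B.graph.Adj z x := fun h => h3 h.symm
  have n1 := h1.ne
  have n2 := h2.ne
  have n1' := h1.ne'
  have n2' := h2.ne'
  have hxz' := hxz.symm
  refine C4_not (glue (OK_her r s) g₁ g₂ h hB hA C4 ⟨(0 : Fin 4)⟩ {u : Fin 4 | u ≠ 3}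
    ![x, y, z, z] (fun _ => a) ?_ ?_)
  · have key : ∀ u v : Fin 4, u ≠ 3 → v ≠ 3 →
        ((![x, y, z, z] : Fin 4 → B.V) u = (![x, y, z, z] : Fin 4 → B.V) v → u = v) ∧
        (B.graph.Adj ((![x, y, z, z] : Fin 4 → B.V) u) ((![x, y, z, z] : Fin 4 → B.V) v) ↔
          (u.val + v.val) % 2 = 1) := by
      intro u v hu hv
      fin_cases u <;> fin_cases v <;> simp_all
    exact fun u hu v hv => key u v hu hv
  · intro (u : Fin 4) hu (v : Fin 4) hv
    have hu : u = 3 := not_not.1 hu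
    have hv : v = 3 := not_not.1 hv
    subst hu; subst hv
    exact ⟨fun _ => rfl, iff_of_false (fun h => h.ne rfl) (fun h => h.ne rfl)⟩

lemma OK_nocoP3 {r s : ℕ∞} {Q₁ Q₂ : GProp} (g₁ : IsGProp Q₁) (g₂ : IsGProp Q₂)
    (h : GProp.prod (Oprop r) (Kprop s) = GProp.prod Q₁ Q₂) {B : FGraph} (hB : Q₁ B) (x y z : B.V)
    (hxy : x ≠ y) (hyz : y ≠ z)
    (h1 : ¬ B.graph.Adj x y) (h2 : ¬ B.graph.Adj y z) (h3 : B.graph.Adj x z) : False := by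
  refine OK_noP3 (cP_gprop g₁) (cP_gprop g₂) (OK_compl h) (B := cG B) (by unfold cP; rwa [cG_cG])
    x y z h3.ne ⟨hxy, h1⟩ ⟨hyz, h2⟩ (fun h => h.2 h3)

def P4 : FGraph := ⟨Fin 4, ⟨fun u v => u.val + 1 = v.val ∨ v.val + 1 = u.val,
  ⟨fun u v h => h.symm⟩, ⟨fun u h => by omega⟩⟩⟩

lemma P4_adj (u v : Fin 4) : P4.graph.Adj u v ↔ (u.val + 1 = v.val ∨ v.val + 1 = u.val) := Iff.rfl

lemma P4_mem {r s : ℕ∞} (hr : 2 ≤ r) (hs : 2 ≤ s) : GProp.prod (Oprop r) (Kprop s) P4 := by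
  have hO2 : Oprop r ⟨Fin 2, ⊥⟩ := ⟨⟨0⟩, rfl, by simpa using hr⟩
  have hK2 : Kprop s ⟨Fin 2, ⊤⟩ := ⟨⟨0⟩, rfl, by simpa using hs⟩
  refine ⟨⟨(0 : Fin 4)⟩, {u : Fin 4 | u = 0 ∨ u = 3}, fun hh => ?_, fun hh => ?_⟩
  · refine of_emb (O_her r) hO2 _ _ hh (![0, 0, 0, 1] : Fin 4 → Fin 2) ?_
    have key : ∀ u v : Fin 4, (u = 0 ∨ u = 3) → (v = 0 ∨ v = 3) →
        ((![0, 0, 0, 1] : Fin 4 → Fin 2) u = (![0, 0, 0, 1] : Fin 4 → Fin 2) v → u = v) ∧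
        ((⊥ : SimpleGraph (Fin 2)).Adj ((![0, 0, 0, 1] : Fin 4 → Fin 2) u)
          ((![0, 0, 0, 1] : Fin 4 → Fin 2) v) ↔ (u.val + 1 = v.val ∨ v.val + 1 = u.val)) := by
      intro u v hu hv
      fin_cases u <;> fin_cases v <;> simp_all
    exact fun u hu v hv => key u v hu hv
  · refine of_emb (K_her s) hK2 _ _ hh (![0, 0, 1, 1] : Fin 4 → Fin 2) ?_
    have key : ∀ u v : Fin 4, ¬ (u = 0 ∨ u = 3) → ¬ (v = 0 ∨ v = 3) →
        ((![0, 0, 1, 1] : Fin 4 → Fin 2) u = (![0, 0, 1, 1] : Fin 4 → Fin 2) v → u = v) ∧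
        ((⊤ : SimpleGraph (Fin 2)).Adj ((![0, 0, 1, 1] : Fin 4 → Fin 2) u)
          ((![0, 0, 1, 1] : Fin 4 → Fin 2) v) ↔ (u.val + 1 = v.val ∨ v.val + 1 = u.val)) := by
      intro u v hu hv
      fin_cases u <;> fin_cases v <;> simp_all
    exact fun u hu v hv => key u v hu hv

lemma OK_nontriv {r s : ℕ∞} (hr : 2 ≤ r) (hs : 2 ≤ s) {Q₁ Q₂ : GProp} (g₁ : IsGProp Q₁) (g₂ : IsGProp Q₂)
    (h : GProp.prod (Oprop r) (Kprop s) = GProp.prod Q₁ Q₂) (c : Complete Q₁) (e : Edgeless Q₁) : False := by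
  have hm := P4_mem hr hs
  rw [h] at hm
  obtain ⟨_, t, ht, ht'⟩ := hm
  have i1 := indep_of e ht
  have i2 := clique_of c ht
  have sub : ∀ u v : Fin 4, u ≠ v → u ∈ t → v ∉ t := by
    intro u v huv h1 h2
    exact i1 _ h1 _ h2 (i2 _ h1 _ h2 huv)
  have h' := h.trans (prod_comm _ _)
  have noP3 : ∀ x y z : Fin 4, x ∉ t → y ∉ t → z ∉ t → x ≠ z → P4.graph.Adj x y → P4.graph.Adj y z →
      ¬ P4.graph.Adj x z → False := by
    intro x y z hx hy hz hxz a b c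
    exact OK_noP3 g₂ g₁ h' (ht' ⟨x, hx⟩) ⟨x, hx⟩ ⟨y, hy⟩ ⟨z, hz⟩
      (fun h => hxz (congrArg (fun z : (tᶜ : Set (Fin 4)) => z.1) h)) a b c
  have nocoP3 : ∀ x y z : Fin 4, x ∉ t → y ∉ t → z ∉ t → x ≠ y → y ≠ z → ¬ P4.graph.Adj x y →
      ¬ P4.graph.Adj y z → P4.graph.Adj x z → False := by
    intro x y z hx hy hz hxy hyz a b c
    exact OK_nocoP3 g₂ g₁ h' (ht' ⟨x, hx⟩) ⟨x, hx⟩ ⟨y, hy⟩ ⟨z, hz⟩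
      (fun h => hxy (congrArg (fun z : (tᶜ : Set (Fin 4)) => z.1) h))
      (fun h => hyz (congrArg (fun z : (tᶜ : Set (Fin 4)) => z.1) h)) a b c
  have q1 := fun a b c => noP3 0 1 2 a b c (by decide) (by simp [P4_adj]) (by simp [P4_adj]) (by simp [P4_adj])
  have q2 := fun a b c => noP3 1 2 3 a b c (by decide) (by simp [P4_adj]) (by simp [P4_adj]) (by simp [P4_adj])
  have q3 := fun a b c => nocoP3 0 3 1 a b c (by decide) (by decide) (by simp [P4_adj]) (by simp [P4_adj]) (by simp [P4_adj])
  have q4 := fun a b c => nocoP3 2 0 3 a b c (by decide) (by decide) (by simp [P4_adj]) (by simp [P4_adj]) (by simp [P4_adj])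
  have s1 := sub 0 1 (by decide)
  have s2 := sub 0 2 (by decide)
  have s3 := sub 0 3 (by decide)
  have s4 := sub 1 2 (by decide)
  have s5 := sub 1 3 (by decide)
  have s6 := sub 2 3 (by decide)
  by_cases h0 : (0 : Fin 4) ∈ t
  · exact q2 (s1 h0) (s2 h0) (s3 h0)
  by_cases h1 : (1 : Fin 4) ∈ t
  · exact q4 (s4 h1) h0 (s5 h1)
  by_cases h2 : (2 : Fin 4) ∈ t
  · exact q3 h0 (s6 h2) h1
  exact q1 h0 h1 h2

lemma card_split (G : FGraph) (t : Set G.V) :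
    Fintype.card (G.induce t).V + Fintype.card (G.induce tᶜ).V = Fintype.card G.V := by
  have h1 : ∀ t : Set G.V, Fintype.card (G.induce t).V = t.ncard := by
    intro t
    rw [← Nat.card_coe_set_eq]
    exact (Nat.card_eq_fintype_card).symm
  rw [h1, h1, Set.ncard_add_ncard_compl, Nat.card_eq_fintype_card]

lemma card_zero {G : FGraph} {t : Set G.V} (h : ¬ t.Nonempty) : Fintype.card (G.induce t).V = 0 := by
  rw [Fintype.card_eq_zero_iff]
  exact ⟨fun x => h ⟨x.1, x.2⟩⟩

lemma OK_card {r s : ℕ} {Q₁ Q₂ : GProp} (g₁ : IsGProp Q₁) (g₂ : IsGProp Q₂)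
    (h : GProp.prod (Oprop r) (Kprop s) = GProp.prod Q₁ Q₂) (e : Edgeless Q₁) {A : FGraph} (hA : Q₁ A) :
    Fintype.card A.V ≤ r := by
  obtain ⟨B, hB⟩ := g₂.nonempty
  obtain ⟨b⟩ := g₂.vertexNonempty B hB
  obtain ⟨a⟩ := g₁.vertexNonempty A hA
  have hm : GProp.prod (Oprop r) (Kprop s) ⟨Option A.V, ⊥⟩ := by
    refine glue (OK_her r s) g₁ g₂ h hA hB _ ⟨none⟩ {o : Option A.V | o ≠ none} (fun o => o.getD a)
      (fun _ => b) ?_ ?_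
    · intro (u : Option A.V) hu (v : Option A.V) hv
      have hu : u ≠ none := hu
      have hv : v ≠ none := hv
      rw [e A hA]
      cases u <;> cases v <;> simp_all
    · intro (u : Option A.V) hu (v : Option A.V) hv
      have hu : u = none := not_not.1 hu
      have hv : v = none := not_not.1 hv
      subst hu; subst hv
      simp
  obtain ⟨_, t, ht, ht'⟩ := hm
  have hs := card_split ⟨Option A.V, ⊥⟩ t
  have hO : Fintype.card (FGraph.mk (Option A.V) ⊥).V = Fintype.card A.V + 1 := Fintype.card_option
  rw [hO] at hs
  have c1 : Fintype.card ((FGraph.mk (Option A.V) ⊥).induce t).V ≤ r := by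
    by_cases hn : t.Nonempty
    · exact_mod_cast (ht hn).2.2
    · rw [card_zero hn]; omega
  have c2 : Fintype.card ((FGraph.mk (Option A.V) ⊥).induce tᶜ).V ≤ 1 := by
    rw [Fintype.card_le_one_iff]
    intro x y
    by_contra hne
    exact clique_of (K_complete s) ht' x.1 x.2 y.1 y.2 (fun h => hne (Subtype.ext h))
  omega

def splitG (i s : ℕ) : FGraph := ⟨Fin i ⊕ Fin s, ⟨fun u v => u ≠ v ∧ ¬ (u.isLeft ∧ v.isLeft),
  ⟨fun u v h => ⟨h.1.symm, fun h' => h.2 h'.symm⟩⟩, ⟨fun u h => h.1 rfl⟩⟩⟩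

lemma splitG_adj {i s : ℕ} (u v : Fin i ⊕ Fin s) :
    (splitG i s).graph.Adj u v ↔ u ≠ v ∧ ¬ (u.isLeft ∧ v.isLeft) := Iff.rfl

lemma OK_full {r s : ℕ} (hr : 1 ≤ r) (hs : 1 ≤ s) {Q₁ Q₂ : GProp} (g₁ : IsGProp Q₁)
    (h : GProp.prod (Oprop r) (Kprop s) = GProp.prod Q₁ Q₂) (e : Edgeless Q₁)
    (hc : ∀ A, Q₂ A → Fintype.card A.V ≤ s) (i : ℕ) (hi : 1 ≤ i) (hir : i ≤ r) : Q₁ (E i) := by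
  have hO : Oprop r (E i) := (O_E hi).2 (by exact_mod_cast hir)
  have hK : Kprop s ⟨Fin s, ⊤⟩ := ⟨⟨⟨0, hs⟩⟩, rfl, by simp⟩
  have hm : GProp.prod (Oprop r) (Kprop s) (splitG i s) := by
    refine ⟨⟨Sum.inl ⟨0, hi⟩⟩, Set.range Sum.inl, fun _ => ?_, fun _ => ?_⟩
    · exact of_equiv (O_gprop (by exact_mod_cast hr)) hO _ _ Sum.inl Sum.inl_injective
        (fun a b => (splitG_adj (Sum.inl a) (Sum.inl b)).trans 
          (iff_of_false (fun h => h.2 ⟨rfl, rfl⟩) (fun h => h))) rfl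
    · exact of_equiv (K_gprop (by exact_mod_cast hs)) hK _ _ Sum.inr Sum.inr_injective
        (fun a b => (splitG_adj (Sum.inr a) (Sum.inr b)).trans (by simp)) Set.compl_range_inl.symm
  rw [h] at hm
  obtain ⟨_, t, ht, ht'⟩ := hm
  have i1 := indep_of e ht
  have hsum := card_split (splitG i s) t
  have hcard : Fintype.card (splitG i s).V = i + s := by
    change Fintype.card (Fin i ⊕ Fin s) = i + s
    simp
  have c2 : Fintype.card ((splitG i s).induce tᶜ).V ≤ s := by
    by_cases hn : (tᶜ).Nonempty
    · exact hc _ (ht' hn)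
    · rw [card_zero hn]; omega
  have c1 : Fintype.card ((splitG i s).induce t).V ≤ i := by
    let f : Fin i ⊕ Fin s → Fin i := Sum.elim id (fun _ => ⟨0, hi⟩)
    have : Function.Injective (fun x : ((splitG i s).induce t).V => f x.1) := by
      intro x y hxy
      by_contra hne
      have hne' : x.1 ≠ y.1 := fun h => hne (Subtype.ext h)
      have hn := i1 x.1 x.2 y.1 y.2
      obtain ⟨x, hx⟩ := x
      obtain ⟨y, hy⟩ := y
      apply hn
      refine (splitG_adj _ _).2 ⟨hne', ?_⟩
      rintro ⟨hl1, hl2⟩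
      rcases x with x | x
      · rcases y with y | y
        · have hxy' : x = y := hxy
          exact hne' (congrArg (Sum.inl : Fin i → Fin i ⊕ Fin s) hxy')
        · exact absurd hl2 Bool.false_ne_true
      · exact absurd hl1 Bool.false_ne_true
    simpa using Fintype.card_le_of_injective _ this
  have htn : t.Nonempty := by
    by_contra hn
    have := card_zero hn
    omega
  refine edgeless_mem g₁ (ht htn) (e _ (ht htn)) rfl ?_
  have : Fintype.card (E i).V = i := Fintype.card_fin _
  omega

lemma OK_eqO {r s : ℕ} (hr : 1 ≤ r) (hs : 1 ≤ s) {Q₁ Q₂ : GProp} (g₁ : IsGProp Q₁) (g₂ : IsGProp Q₂)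
    (h : GProp.prod (Oprop r) (Kprop s) = GProp.prod Q₁ Q₂) (e : Edgeless Q₁) (c : Complete Q₂) :
    Q₁ = Oprop r := by
  have hc : ∀ A, Q₂ A → Fintype.card A.V ≤ s := by
    intro A hA
    have := OK_card (cP_gprop g₂) (cP_gprop g₁) ((OK_compl h).trans (prod_comm _ _)) (cP_edgeless.2 c)
      (A := cG A) (by unfold cP; rwa [cG_cG])
    exact this
  refine eq_O g₁ e r fun n hn => ⟨fun hE => ?_, fun hE => ?_⟩
  · have := OK_card g₁ g₂ h e hE
    have hE' : Fintype.card (E n).V = n := Fintype.card_fin _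
    rw [hE'] at this
    exact_mod_cast this
  · exact OK_full hr hs g₁ h e hc n hn (by exact_mod_cast hE)

lemma OK_eq {r s : ℕ} (hr : 1 ≤ r) (hs : 1 ≤ s) {Q₁ Q₂ : GProp} (g₁ : IsGProp Q₁) (g₂ : IsGProp Q₂)
    (h : GProp.prod (Oprop r) (Kprop s) = GProp.prod Q₁ Q₂) (e : Edgeless Q₁) (c : Complete Q₂) :
    Q₁ = Oprop r ∧ Q₂ = Kprop s := by
  refine ⟨OK_eqO hr hs g₁ g₂ h e c, ?_⟩
  have := OK_eqO hs hr (cP_gprop g₂) (cP_gprop g₁) ((OK_compl h).trans (prod_comm _ _))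
    (cP_edgeless.2 c) (cP_complete.2 e)
  rw [← cP_O, ← this, cP_cP]

lemma OK_huf {r s : ℕ} (hr : 1 ≤ r) (hs : 1 ≤ s) :
    HasUniqueFactorisation (GProp.prod (Oprop (r : ℕ∞)) (Kprop (s : ℕ∞))) := by
  have hr' : (1 : ℕ∞) ≤ r := by exact_mod_cast hr
  have hs' : (1 : ℕ∞) ≤ s := by exact_mod_cast hs
  by_cases r1 : r = 1
  · subst r1
    rw [Nat.cast_one, O_one]
    exact KK_huf le_rfl hs'
  by_cases s1 : s = 1
  · subst s1
    rw [Nat.cast_one, ← O_one]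
    exact OO_huf hr' le_rfl
  have hr2 : (2 : ℕ∞) ≤ r := by exact_mod_cast (by omega : 2 ≤ r)
  have hs2 : (2 : ℕ∞) ≤ s := by exact_mod_cast (by omega : 2 ≤ s)
  refine huf_of (A := Oprop r) (B := Kprop s) fun Q₁ Q₂ g₁ g₂ h => ?_
  have h' := h.trans (prod_comm _ _)
  have k := OK_complete g₁ g₂ h
  have o := OK_edgeless g₁ g₂ h
  have t1 := OK_nontriv hr2 hs2 g₁ g₂ h
  have t2 := OK_nontriv hr2 hs2 g₂ g₁ h'
  by_cases e : Edgeless Q₁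
  · left
    exact OK_eq hr hs g₁ g₂ h e (by tauto)
  · right
    have := OK_eq hr hs g₂ g₁ h' (by tauto) (by tauto)
    exact ⟨this.2, this.1⟩

end UF

/-- an induced-hereditary graph property `P` has a unique
factorisation iff `P` is irreducible, or `P = O(r) ∘ O(s)` with `1 ≤ r,s ≤ ∞`,
or `P = K(r) ∘ K(s)` with `1 ≤ r,s ≤ ∞`, or `P = O(r) ∘ K(s)` with
`r, s` finite, `≥ 1`. -/
theorem statement_3 (P : GProp) (hP : IsGProp P) (hind : IndHereditary P) :
    HasUniqueFactorisation P ↔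
      (IrreducibleProp P ∨
       (∃ r s : ℕ∞, 1 ≤ r ∧ 1 ≤ s ∧ P = GProp.prod (Oprop r) (Oprop s)) ∨
       (∃ r s : ℕ∞, 1 ≤ r ∧ 1 ≤ s ∧ P = GProp.prod (Kprop r) (Kprop s)) ∨
       (∃ r s : ℕ, 1 ≤ r ∧ 1 ≤ s ∧
          P = GProp.prod (Oprop (r : ℕ∞)) (Kprop (s : ℕ∞)))) := by
  constructor
  · exact UF.forward hP hind
  · rintro (h | ⟨r, s, hr, hs, rfl⟩ | ⟨r, s, hr, hs, rfl⟩ | ⟨r, s, hr, hs, rfl⟩)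
    · intro Q₁ Q₂ R₁ R₂ a b _ _ c d _ _ e _
      exact absurd ⟨Q₁, Q₂, a, b, c, d, e⟩ h
    · exact UF.OO_huf hr hs
    · exact UF.KK_huf hr hs
    · exact UF.OK_huf hr hs
end

section
/- Let P be a hereditary compositive graph property not containing all graphs, and let d = dc(P). Then there exist hereditary compositive properties P₁,…,P_d, each indecomposable (dc(Pᵢ) = 1), such that P = P₁∘⋯∘P_d. Moreover, if P is additive, then the Pᵢ can be chosen to be additive as well. -/
attribute [local instance] Classical.propDecidable

open SimpleGraph

/-- `P` is hereditary compositive: hereditary, and any two members of `P` are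
both subgraphs of some member of `P`. -/
def HerCompositive (P : GProp) : Prop :=
  Hereditary P ∧ ∀ G H, P G → P H → ∃ K, P K ∧ G.IsSub K ∧ H.IsSub K

/-- The disjoint union of two bundled finite graphs. -/
def FGraph.disjUnion (G H : FGraph) : FGraph := ⟨G.V ⊕ H.V, G.graph ⊕g H.graph⟩

/-- `P` is additive: closed under (finite) disjoint unions. -/
def AdditiveProp (P : GProp) : Prop := ∀ G H, P G → P H → P (G.disjUnion H)

/-- `H + e`: the graph obtained from `H` by adding the edge `{a, b}`. -/
def addEdge (H : FGraph) (a b : H.V) : FGraph :=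
  ⟨H.V, H.graph ⊔ SimpleGraph.fromEdgeSet {s(a, b)}⟩

/-- `G` is `P`-maximal: `G ∈ P` but adding any edge of the complement of `G`
leaves `P`. -/
def PMaximal (P : GProp) (G : FGraph) : Prop :=
  P G ∧ ∀ a b : G.V, a ≠ b → ¬ G.graph.Adj a b → ¬ P (addEdge G a b)

/-- `c(P)`: the largest `r` such that the complete graph `K_r` belongs to `P`. -/
noncomputable def cNum (P : GProp) : ℕ :=
  sSup {r : ℕ | P ⟨Fin r, (⊤ : SimpleGraph (Fin r))⟩}

/-- `G ∈ M*(P)`: `G` is `P`-maximal with at least `c(P)` vertices. -/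
def PMaxStar (P : GProp) (G : FGraph) : Prop :=
  PMaximal P G ∧ cNum P ≤ Fintype.card G.V

/-- `dc(G)`: the number of ind-parts of `G`, i.e. the number of connected
components of the complement of `G`. -/
noncomputable def dc (G : FGraph) : ℕ := Fintype.card (G.graphᶜ.ConnectedComponent)

/-- `dc(P) = min {dc(G) : G ∈ M*(P)}`; `P` is indecomposable if `dc(P) = 1`. -/
noncomputable def dcP (P : GProp) : ℕ := sInf {n : ℕ | ∃ G, PMaxStar P G ∧ dc G = n}

namespace S17

lemma mono {P : GProp} (hh : Hereditary P) {G H : FGraph} (hG : P G) (f : H.V → G.V)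
    (hf : Function.Injective f) (ha : ∀ u v, H.graph.Adj u v → G.graph.Adj (f u) (f v))
    (hn : Nonempty H.V) : P H :=
  hh G H hG ⟨⟨f, fun {u v} h => ha u v h⟩, hf⟩ hn

lemma addEdge_adj (H : FGraph) (a b u v : H.V) :
    (addEdge H a b).graph.Adj u v ↔
      H.graph.Adj u v ∨ (((a = u ∧ b = v) ∨ (a = v ∧ b = u)) ∧ u ≠ v) := by
  simp [addEdge, eq_comm]

/-- Maximal members reflect adjacency. -/
lemma refl_adj {P : GProp} (hh : Hereditary P) {H H' : FGraph} (hH : PMaximal P H) (hH' : P H')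
    (f : H.V → H'.V) (hf : Function.Injective f)
    (ha : ∀ u v, H.graph.Adj u v → H'.graph.Adj (f u) (f v)) (u v : H.V)
    (h : H'.graph.Adj (f u) (f v)) : H.graph.Adj u v := by
  by_contra hc
  have hne : u ≠ v := by
    rintro rfl
    exact H'.graph.loopless.irrefl _ h
  refine hH.2 u v hne hc (mono hh hH' f hf ?_ ⟨u⟩)
  intro x y hxy
  rcases (addEdge_adj H u v x y).1 hxy with h1 | ⟨⟨rfl, rfl⟩ | ⟨rfl, rfl⟩, _⟩
  · exact ha _ _ h1
  · exact h
  · exact h.symm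

lemma bdd {P : GProp} (hcomp : HerCompositive P)
    (hnotall : ¬ ∀ G : FGraph, Nonempty G.V → P G) :
    BddAbove {r : ℕ | P ⟨Fin r, (⊤ : SimpleGraph (Fin r))⟩} := by
  push Not at hnotall
  obtain ⟨G, hn, hG⟩ := hnotall
  refine ⟨Fintype.card G.V, fun r hr => ?_⟩
  by_contra hlt
  push Not at hlt
  apply hG
  let e := Fintype.equivFin G.V
  refine mono hcomp.1 hr (fun v => Fin.castLE hlt.le (e v)) ?_ ?_ hn
  · intro a b hab
    exact e.injective (Fin.castLE_injective _ hab)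
  · intro u v h
    have : u ≠ v := h.ne
    simpa using this

lemma one_mem {P : GProp} (hP : IsGProp P) (hh : Hereditary P) :
    P ⟨Fin 1, (⊤ : SimpleGraph (Fin 1))⟩ := by
  obtain ⟨G, hG⟩ := hP.nonempty
  obtain ⟨x⟩ := hP.vertexNonempty G hG
  refine mono hh hG (fun _ => x) (fun a b _ => Subsingleton.elim (α := Fin 1) _ _) ?_ ⟨(0 : Fin 1)⟩
  intro u v h
  exact absurd (Subsingleton.elim (α := Fin 1) u v) h.ne

lemma c_mem {P : GProp} (hP : IsGProp P) (hh : Hereditary P)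
    (hb : BddAbove {r : ℕ | P ⟨Fin r, (⊤ : SimpleGraph (Fin r))⟩}) :
    P ⟨Fin (cNum P), (⊤ : SimpleGraph (Fin (cNum P)))⟩ :=
  Nat.sSup_mem (s := {r : ℕ | P ⟨Fin r, (⊤ : SimpleGraph (Fin r))⟩}) ⟨1, one_mem hP hh⟩ hb

lemma adj_of_not_reach {V : Type} {G : SimpleGraph V} {u v : V} (h : ¬ Gᶜ.Reachable u v) :
    G.Adj u v := by
  by_contra hc
  by_cases he : u = v
  · subst he; exact h (SimpleGraph.Reachable.refl _)
  · exact h (SimpleGraph.Adj.reachable ((SimpleGraph.compl_adj _ _ _).2 ⟨he, hc⟩))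

lemma no_miss {P : GProp} (hh : Hereditary P)
    (hb : BddAbove {r : ℕ | P ⟨Fin r, (⊤ : SimpleGraph (Fin r))⟩})
    {H H' : FGraph} (hH : PMaxStar P H) (hH' : P H')
    (f : H.V → H'.V) (hf : Function.Injective f)
    (ha : ∀ u v, H.graph.Adj u v → H'.graph.Adj (f u) (f v)) (x : H'.V) :
    ∃ v, H'.graphᶜ.Reachable (f v) x := by
  by_contra hc
  push Not at hc
  have hadj : ∀ v, H'.graph.Adj (f v) x := fun v => adj_of_not_reach (hc v)
  have hne : ∀ v, f v ≠ x := fun v => (hadj v).ne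
  by_cases hcomplete : ∀ a b : H.V, a ≠ b → H.graph.Adj a b
  · have hcard : Fintype.card (Option H.V) = Fintype.card H.V + 1 := Fintype.card_option
    let e := Fintype.equivFinOfCardEq hcard
    have hK : P ⟨Fin (Fintype.card H.V + 1), ⊤⟩ := by
      have key : ∀ o o' : Option H.V, o ≠ o' →
          H'.graph.Adj (o.elim x f) (o'.elim x f) := by
        rintro (_ | a) (_ | b) hab
        · exact absurd rfl hab
        · exact (hadj b).symm
        · exact hadj a
        · exact ha _ _ (hcomplete a b (fun h => hab (by rw [h])))
      refine mono hh hH' (fun i => (e.symm i).elim x f) ?_ ?_ ⟨(0 : Fin (_ + 1))⟩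
      · intro i j hij
        by_contra hne
        exact (key _ _ (fun h => hne (e.symm.injective h))).ne hij
      · intro i j hij
        exact key _ _ (fun h => hij.ne (e.symm.injective h))
    have h1 : Fintype.card H.V + 1 ≤ cNum P := le_csSup hb hK
    have h2 := hH.2
    omega
  · push Not at hcomplete
    obtain ⟨a, b, hab, hn⟩ := hcomplete
    have hinj : ∀ u v : H.V, Function.update f a x u = Function.update f a x v → u = v := by
      intro u v huv
      by_cases hu : u = a <;> by_cases hv : v = a
      · rw [hu, hv]
      · subst hu
        rw [Function.update_self, Function.update_of_ne hv] at huv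
        exact absurd huv.symm (hne v)
      · subst hv
        rw [Function.update_self, Function.update_of_ne hu] at huv
        exact absurd huv (hne u)
      · rw [Function.update_of_ne hu, Function.update_of_ne hv] at huv
        exact hf huv
    have hhom : ∀ u v : H.V, H.graph.Adj u v ∨ (((a = u ∧ b = v) ∨ (a = v ∧ b = u)) ∧ u ≠ v) →
        H'.graph.Adj (Function.update f a x u) (Function.update f a x v) := by
      intro u v huv
      have hne' : u ≠ v := by
        rcases huv with h | h
        · exact h.ne
        · exact h.2
      by_cases hu : u = a <;> by_cases hv : v = a
      · exact absurd (hu.trans hv.symm) hne'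
      · subst hu
        rw [Function.update_self, Function.update_of_ne hv]
        exact (hadj v).symm
      · subst hv
        rw [Function.update_self, Function.update_of_ne hu]
        exact hadj u
      · rw [Function.update_of_ne hu, Function.update_of_ne hv]
        rcases huv with h | ⟨⟨h, _⟩ | ⟨h, _⟩, _⟩
        · exact ha _ _ h
        · exact absurd h.symm hu
        · exact absurd h.symm hv
    exact hH.1.2 a b hab hn (mono hh hH' (Function.update f a x) (fun u v h => hinj u v h)
      (fun u v h => hhom u v ((addEdge_adj H a b u v).1 h)) ⟨a⟩)

lemma extend {P : GProp} (Z : FGraph) (hZ : P Z) :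
    ∃ G' : SimpleGraph Z.V, Z.graph ≤ G' ∧ PMaximal P ⟨Z.V, G'⟩ := by
  have hfin : {G' : SimpleGraph Z.V | P ⟨Z.V, G'⟩}.Finite := Set.toFinite _
  obtain ⟨G', hle, hmax⟩ := hfin.exists_le_maximal (a := Z.graph) hZ
  refine ⟨G', hle, hmax.prop, ?_⟩
  intro a b hab hn hP
  have h1 : G' ⊔ SimpleGraph.fromEdgeSet {s(a, b)} ≤ G' := hmax.le_of_ge hP le_sup_left
  exact hn (h1 (by simp [hab]))

/-- A maximal graph with its ind-parts labelled by `Fin d`. -/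
structure Good (P : GProp) (d : ℕ) : Type 1 where
  H : FGraph
  lab : H.V → Fin d
  star : PMaxStar P H
  iff : ∀ u v, lab u = lab v ↔ H.graphᶜ.Reachable u v
  surj : Function.Surjective lab

/-- Labelled embeddings. -/
def Emb {P : GProp} {d : ℕ} (g g' : Good P d) (f : g.H.V → g'.H.V) : Prop :=
  Function.Injective f ∧ (∀ u v, g.H.graph.Adj u v → g'.H.graph.Adj (f u) (f v)) ∧
    ∀ v, g'.lab (f v) = g.lab v

lemma dcP_le {P : GProp} {G : FGraph} (h : PMaxStar P G) : dcP P ≤ dc G :=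
  Nat.sInf_le ⟨G, h, rfl⟩

/-- Transport of the labelling along an embedding into a maximal graph. -/
lemma transport {P : GProp} (hh : Hereditary P)
    (hb : BddAbove {r : ℕ | P ⟨Fin r, (⊤ : SimpleGraph (Fin r))⟩})
    (g : Good P (dcP P)) (H' : FGraph) (hH' : PMaximal P H')
    (f : g.H.V → H'.V) (hf : Function.Injective f)
    (ha : ∀ u v, g.H.graph.Adj u v → H'.graph.Adj (f u) (f v)) :
    dc H' = dcP P ∧ ∃ lab : H'.V → Fin (dcP P), (∀ v, lab (f v) = g.lab v) ∧
      (∀ u v, lab u = lab v ↔ H'.graphᶜ.Reachable u v) ∧ Function.Surjective lab ∧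
      PMaxStar P H' := by
  have hstar : PMaxStar P H' :=
    ⟨hH', g.star.2.trans (Fintype.card_le_of_injective f hf)⟩
  have hreach : ∀ u v, g.H.graphᶜ.Reachable u v → H'.graphᶜ.Reachable (f u) (f v) := by
    intro u v huv
    let φ : g.H.graphᶜ →g H'.graphᶜ := ⟨f, by
      intro u v h
      rw [SimpleGraph.compl_adj] at h ⊢
      exact ⟨fun h' => h.1 (hf h'), fun h' => h.2 (refl_adj hh g.star.1 hH'.1 f hf ha _ _ h')⟩⟩
    exact huv.map φ
  choose r hr using g.surj
  let φ : Fin (dcP P) → H'.graphᶜ.ConnectedComponent :=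
    fun i => H'.graphᶜ.connectedComponentMk (f (r i))
  have hφ : ∀ v, φ (g.lab v) = H'.graphᶜ.connectedComponentMk (f v) := by
    intro v
    exact SimpleGraph.ConnectedComponent.sound (hreach _ _ ((g.iff _ _).1 (hr _)))
  have hsurj : Function.Surjective φ := by
    intro c
    induction c using SimpleGraph.ConnectedComponent.ind with
    | h x =>
      obtain ⟨v, hv⟩ := no_miss hh hb g.star hH'.1 f hf ha x
      exact ⟨g.lab v, (hφ v).trans (SimpleGraph.ConnectedComponent.sound hv)⟩
  have h1 : dc H' ≤ dcP P := by
    have := Fintype.card_le_of_surjective φ hsurj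
    simpa [dc] using this
  have h2 := dcP_le hstar
  have hcard : dc H' = dcP P := le_antisymm h1 h2
  have hbij : Function.Bijective φ :=
    (Fintype.bijective_iff_surjective_and_card φ).2 ⟨hsurj, by
      rw [Fintype.card_fin]; exact hcard.symm⟩
  let e := Equiv.ofBijective φ hbij
  refine ⟨hcard, fun x => e.symm (H'.graphᶜ.connectedComponentMk x), ?_, ?_, ?_, hstar⟩
  · intro v
    change e.symm (H'.graphᶜ.connectedComponentMk (f v)) = g.lab v
    rw [← hφ v]
    exact e.symm_apply_apply _
  · intro u v
    rw [e.symm.injective.eq_iff]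
    exact SimpleGraph.ConnectedComponent.eq
  · intro i
    exact ⟨f (r i), by
      change e.symm (e i) = i
      exact e.symm_apply_apply _⟩

lemma copies {P : GProp} (hadd : AdditiveProp P) (H : FGraph) (hH : P H) (k : ℕ) :
    ∃ Y, P Y ∧ ∃ F : Fin k → H.V → Y.V, (∀ i j u v, F i u = F j v → i = j ∧ u = v) ∧
      ∀ i u v, H.graph.Adj u v → Y.graph.Adj (F i u) (F i v) := by
  induction k with
  | zero => exact ⟨H, hH, fun i => i.elim0, fun i => i.elim0, fun i => i.elim0⟩
  | succ k ih =>
    obtain ⟨Y, hY, F, hF, hA⟩ := ih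
    refine ⟨Y.disjUnion H, hadd _ _ hY hH,
      Fin.cons (fun u => Sum.inr u) (fun j u => Sum.inl (F j u)), ?_, ?_⟩
    · intro i j u v
      refine Fin.cases ?_ (fun i => ?_) i <;> refine Fin.cases ?_ (fun j => ?_) j
      · intro h
        exact ⟨rfl, Sum.inr_injective h⟩
      · intro h
        exact absurd (show (Sum.inr u : Y.V ⊕ H.V) = Sum.inl (F j v) from h) (by simp)
      · intro h
        exact absurd (show (Sum.inl (F i u) : Y.V ⊕ H.V) = Sum.inr v from h) (by simp)
      · intro h
        have h' : (Sum.inl (F i u) : Y.V ⊕ H.V) = Sum.inl (F j v) := h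
        obtain ⟨h1, h2⟩ := hF i j u v (Sum.inl_injective h')
        exact ⟨congrArg Fin.succ h1, h2⟩
    · intro i u v h
      refine Fin.cases ?_ (fun i => ?_) i
      · simpa [FGraph.disjUnion] using h
      · simpa [FGraph.disjUnion] using hA i u v h

/-- One step of the chain. -/
lemma step {P : GProp} (hcomp : HerCompositive P)
    (hb : BddAbove {r : ℕ | P ⟨Fin r, (⊤ : SimpleGraph (Fin r))⟩})
    (g : Good P (dcP P)) (X : FGraph) (hX : P X) :
    ∃ g' : Good P (dcP P), X.IsSub g'.H ∧ (∃ f, Emb g g' f) ∧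
      (AdditiveProp P → ∃ f₁ f₂, Emb g g' f₁ ∧ Emb g g' f₂ ∧ ∀ u v, f₁ u ≠ f₂ v) := by
  have hh := hcomp.1
  by_cases hadd : AdditiveProp P
  · let k := (dcP P) ^ (Fintype.card g.H.V) + 1
    obtain ⟨Y, hY, F, hF, hA⟩ := copies hadd g.H g.star.1.1 k
    obtain ⟨Z, hZ, ⟨fX, hfX⟩, ⟨fY, hfY⟩⟩ := hcomp.2 X Y hX hY
    obtain ⟨G', hle, hmax⟩ := extend Z hZ
    let E : Fin k → g.H.V → Z.V := fun i u => fY (F i u)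
    have hE : ∀ i j u v, E i u = E j v → i = j ∧ u = v := fun i j u v h => hF _ _ _ _ (hfY h)
    have hEi : ∀ i, Function.Injective (E i) := fun i u v h => (hE i i u v h).2
    have hEA : ∀ i u v, g.H.graph.Adj u v → G'.Adj (E i u) (E i v) :=
      fun i u v h => hle (fY.map_adj (hA i u v h))
    have ht := fun i => transport hh hb g ⟨Z.V, G'⟩ hmax (E i) (hEi i) (hEA i)
    have hdc := (ht 0).1
    have hpig : ∃ i j : Fin k, i ≠ j ∧
        (fun u => G'ᶜ.connectedComponentMk (E i u)) =
          (fun u => G'ᶜ.connectedComponentMk (E j u)) := by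
      apply Fintype.exists_ne_map_eq_of_card_lt
        (fun (i : Fin k) (u : g.H.V) => G'ᶜ.connectedComponentMk (E i u))
      rw [Fintype.card_fun, Fintype.card_fin]
      have : Fintype.card G'ᶜ.ConnectedComponent = dcP P := hdc
      rw [this]
      exact Nat.lt_succ_self _
    obtain ⟨i, j, hij, heq⟩ := hpig
    obtain ⟨_, lab, h1, h2, h3, h4⟩ := ht i
    have e1 : Emb g ⟨⟨Z.V, G'⟩, lab, h4, h2, h3⟩ (E i) := ⟨hEi i, hEA i, h1⟩
    have e2 : Emb g ⟨⟨Z.V, G'⟩, lab, h4, h2, h3⟩ (E j) := by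
      refine ⟨hEi j, hEA j, fun v => ?_⟩
      rw [← h1 v]
      exact (h2 _ _).2 (SimpleGraph.ConnectedComponent.exact (congrFun heq v)).symm
    refine ⟨⟨⟨Z.V, G'⟩, lab, h4, h2, h3⟩, ?_, ⟨_, e1⟩, fun _ => ⟨_, _, e1, e2, ?_⟩⟩
    · exact ⟨⟨fX, fun h => hle (fX.map_adj h)⟩, hfX⟩
    · intro u v h
      exact hij (hE _ _ _ _ h).1
  · obtain ⟨Z, hZ, ⟨fX, hfX⟩, ⟨fY, hfY⟩⟩ := hcomp.2 X g.H hX g.star.1.1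
    obtain ⟨G', hle, hmax⟩ := extend Z hZ
    obtain ⟨_, lab, h1, h2, h3, h4⟩ := transport hh hb g ⟨Z.V, G'⟩ hmax fY hfY
      (fun u v h => hle (fY.map_adj h))
    refine ⟨⟨⟨Z.V, G'⟩, lab, h4, h2, h3⟩, ?_, ⟨fY, hfY, fun u v h => hle (fY.map_adj h), h1⟩,
      fun h => absurd h hadd⟩
    exact ⟨⟨fX, fun h => hle (fX.map_adj h)⟩, hfX⟩

lemma exists_base {P : GProp} (hP : IsGProp P) (hh : Hereditary P)
    (hb : BddAbove {r : ℕ | P ⟨Fin r, (⊤ : SimpleGraph (Fin r))⟩}) :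
    Nonempty (Good P (dcP P)) := by
  have hne : {n : ℕ | ∃ G, PMaxStar P G ∧ dc G = n}.Nonempty := by
    refine ⟨_, ⟨Fin (cNum P), ⊤⟩, ⟨⟨c_mem hP hh hb, ?_⟩, ?_⟩, rfl⟩
    · intro a b hab hn
      exact absurd hab hn
    · simp
  obtain ⟨G, hG, hd⟩ := Nat.sInf_mem hne
  have hd' : Fintype.card G.graphᶜ.ConnectedComponent = dcP P := hd
  let e := Fintype.equivFinOfCardEq hd'
  refine ⟨⟨G, fun v => e (G.graphᶜ.connectedComponentMk v), hG, ?_, ?_⟩⟩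
  · intro u v
    rw [e.injective.eq_iff]
    exact SimpleGraph.ConnectedComponent.eq
  · intro i
    obtain ⟨v, hv⟩ := (e.symm i).exists_rep
    refine ⟨v, ?_⟩
    have : G.graphᶜ.connectedComponentMk v = e.symm i := hv
    simp [this]

lemma enum {P : GProp} (hP : IsGProp P) (hh : Hereditary P) :
    ∃ X : ℕ → FGraph, (∀ n, P (X n)) ∧ ∀ G, P G → ∃ n, G.IsSub (X n) := by
  let T := {p : Σ n, SimpleGraph (Fin n) // P ⟨Fin p.1, p.2⟩}
  have : Nonempty T := ⟨⟨⟨1, ⊤⟩, one_mem hP hh⟩⟩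
  obtain ⟨s, hs⟩ := exists_surjective_nat T
  refine ⟨fun n => ⟨Fin (s n).1.1, (s n).1.2⟩, fun n => (s n).2, fun G hG => ?_⟩
  let e := Fintype.equivFin G.V
  let G' : SimpleGraph (Fin (Fintype.card G.V)) := G.graph.map e.toEmbedding
  have i : G.graph ≃g G' := SimpleGraph.Iso.map e G.graph
  have hG' : P ⟨Fin (Fintype.card G.V), G'⟩ := hP.isoClosed G ⟨_, G'⟩ ⟨i⟩ hG
  obtain ⟨n, hn⟩ := hs ⟨⟨_, G'⟩, hG'⟩
  refine ⟨n, ?_⟩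
  change G.IsSub ⟨Fin (s n).1.1, (s n).1.2⟩
  rw [hn]
  exact ⟨i.toHom, i.injective⟩

theorem main (P : GProp) (hP : IsGProp P) (hcomp : HerCompositive P)
    (hnotall : ¬ ∀ G : FGraph, Nonempty G.V → P G) :
    ∃ Ps : Fin (dcP P) → GProp,
      (∀ i, IsGProp (Ps i) ∧ HerCompositive (Ps i) ∧ dcP (Ps i) = 1) ∧
      P = GProp.iProd Ps ∧ (AdditiveProp P → ∀ i, AdditiveProp (Ps i)) := by
  have hh := hcomp.1
  have hb := bdd hcomp hnotall
  obtain ⟨X, hX, hXall⟩ := enum hP hh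
  obtain ⟨g0⟩ := exists_base hP hh hb
  choose st hst1 hst2 hst3 using fun (g : Good P (dcP P)) (n : ℕ) => step hcomp hb g (X n) (hX n)
  let S : ℕ → Good P (dcP P) := fun n => Nat.rec g0 (fun n g => st g n) n
  have hS1 : ∀ n, (X n).IsSub (S (n+1)).H := fun n => hst1 (S n) n
  have hS2 : ∀ n, ∃ f, Emb (S n) (S (n+1)) f := fun n => hst2 (S n) n
  have hS3 : AdditiveProp P → ∀ n, ∃ f₁ f₂, Emb (S n) (S (n+1)) f₁ ∧ Emb (S n) (S (n+1)) f₂ ∧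
      ∀ u v, f₁ u ≠ f₂ v := fun h n => hst3 (S n) n h
  have hmono : ∀ n m, n ≤ m → ∃ f, Emb (S n) (S m) f := by
    intro n m hnm
    induction m, hnm using Nat.le_induction with
    | base => exact ⟨id, fun _ _ h => h, fun _ _ h => h, fun _ => rfl⟩
    | succ m _ ih =>
      obtain ⟨f, hf1, hf2, hf3⟩ := ih
      obtain ⟨f', hf1', hf2', hf3'⟩ := hS2 m
      exact ⟨f' ∘ f, hf1'.comp hf1, fun u v h => hf2' _ _ (hf2 _ _ h),
        fun v => (hf3' _).trans (hf3 v)⟩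
  let Q : Fin (dcP P) → ℕ → FGraph → Prop := fun i n G => ∃ f : G.V → (S n).H.V,
    Function.Injective f ∧ (∀ u v, G.graph.Adj u v → (S n).H.graph.Adj (f u) (f v)) ∧
      ∀ v, (S n).lab (f v) = i
  have hQmono : ∀ i n m G, n ≤ m → Q i n G → Q i m G := by
    rintro i n m G hnm ⟨f, h1, h2, h3⟩
    obtain ⟨f', h1', h2', h3'⟩ := hmono n m hnm
    exact ⟨f' ∘ f, h1'.comp h1, fun u v h => h2' _ _ (h2 _ _ h), fun v => (h3' _).trans (h3 v)⟩
  let Ps : Fin (dcP P) → GProp := fun i G => Nonempty G.V ∧ ∃ n, Q i n G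
  -- the parts
  let K : Fin (dcP P) → ℕ → FGraph := fun i n => (S n).H.induce {v | (S n).lab v = i}
  have hKn : ∀ i n, Nonempty (K i n).V := by
    intro i n
    obtain ⟨v, hv⟩ := (S n).surj i
    exact ⟨⟨v, hv⟩⟩
  have hK : ∀ i n, Ps i (K i n) := fun i n =>
    ⟨hKn i n, n, fun v => v.1, Subtype.val_injective, fun u v h => h, fun v => v.2⟩
  have hQK : ∀ i n G, Q i n G → G.IsSub (K i n) := by
    rintro i n G ⟨f, h1, h2, h3⟩
    exact ⟨⟨fun v => ⟨f v, h3 v⟩, fun {u v} h => h2 u v h⟩,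
      fun u v h => h1 (congrArg Subtype.val h)⟩
  have hPsHer : ∀ i, Hereditary (Ps i) := by
    rintro i G H ⟨_, n, f, h1, h2, h3⟩ ⟨φ, hφ⟩ hn
    exact ⟨hn, n, f ∘ φ, h1.comp hφ, fun u v h => h2 _ _ (φ.map_adj h), fun v => h3 _⟩
  have hPsG : ∀ i, IsGProp (Ps i) := fun i =>
    { nonempty := ⟨_, hK i 0⟩
      vertexNonempty := fun G h => h.1
      isoClosed := by
        rintro G H ⟨e⟩ hG
        obtain ⟨x⟩ := hG.1
        exact hPsHer i G H hG ⟨e.symm.toHom, e.symm.injective⟩ ⟨e x⟩ }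
  have hPsC : ∀ i, HerCompositive (Ps i) := by
    refine fun i => ⟨hPsHer i, ?_⟩
    rintro G H ⟨_, n, hn⟩ ⟨_, m, hm⟩
    exact ⟨K i (max n m), hK _ _, hQK _ _ _ (hQmono _ _ _ _ (le_max_left _ _) hn),
      hQK _ _ _ (hQmono _ _ _ _ (le_max_right _ _) hm)⟩
  have hprod : P = GProp.iProd Ps := by
    funext G
    apply propext
    constructor
    · intro hG
      refine ⟨hP.vertexNonempty G hG, ?_⟩
      obtain ⟨n, φ, hφ⟩ := hXall G hG
      obtain ⟨ψ, hψ⟩ := hS1 n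
      refine ⟨fun v => (S (n+1)).lab (ψ (φ v)), fun i hi => ⟨hi.to_subtype, n+1, ?_⟩⟩
      refine ⟨fun v => ψ (φ v.1), ?_, ?_, ?_⟩
      · intro u v h
        exact Subtype.ext (hφ (hψ h))
      · intro u v h
        have h' : G.graph.Adj u.1 v.1 := h
        exact ψ.map_adj (φ.map_adj h')
      · intro v
        exact v.2
    · rintro ⟨hn, f, hf⟩
      have h1 : ∀ i, ∃ n, (f ⁻¹' {i}).Nonempty → Q i n (G.induce (f ⁻¹' {i})) := by
        intro i
        by_cases hi : (f ⁻¹' {i}).Nonempty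
        · obtain ⟨_, n, h⟩ := hf i hi
          exact ⟨n, fun _ => h⟩
        · exact ⟨0, fun h => absurd h hi⟩
      choose n hn1 using h1
      let N := Finset.univ.sup n
      have h2 : ∀ i, ∃ h : G.V → (S N).H.V, (∀ v, f v = i → (S N).lab (h v) = i) ∧
          (∀ u v, f u = i → f v = i → h u = h v → u = v) ∧
          (∀ u v, f u = i → f v = i → G.graph.Adj u v → (S N).H.graph.Adj (h u) (h v)) := by
        intro i
        obtain ⟨x, hx⟩ := (S N).surj i
        by_cases hi : (f ⁻¹' {i}).Nonempty
        · obtain ⟨q, q1, q2, q3⟩ := hQmono i (n i) N _ (Finset.le_sup (Finset.mem_univ i)) (hn1 i hi)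
          refine ⟨fun v => if hv : f v = i then q ⟨v, hv⟩ else x, ?_, ?_, ?_⟩
          · intro v hv
            simp only [hv, dif_pos]
            exact q3 _
          · intro u v hu hv h
            simp only [hu, hv, dif_pos] at h
            exact congrArg Subtype.val (q1 h)
          · intro u v hu hv h
            simp only [hu, hv, dif_pos]
            exact q2 _ _ h
        · have : ∀ v, f v ≠ i := fun v hv => hi ⟨v, hv⟩
          exact ⟨fun _ => x, fun v hv => absurd hv (this v), fun u _ hu => absurd hu (this u),
            fun u _ hu => absurd hu (this u)⟩
      choose h a1 a2 a3 using h2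
      refine mono hh (S N).star.1.1 (fun v => h (f v) v) ?_ ?_ hn
      · intro u v huv
        have huv' : h (f u) u = h (f v) v := huv
        have hl : f u = f v := by
          have := congrArg (S N).lab huv'
          rwa [a1 _ u rfl, a1 _ v rfl] at this
        rw [← hl] at huv'
        exact a2 (f u) u v rfl hl.symm huv'
      · intro u v huv
        by_cases hl : f u = f v
        · have := a3 (f u) u v rfl hl.symm huv
          change (S N).H.graph.Adj (h (f u) u) (h (f v) v)
          rw [← hl]
          exact this
        · apply adj_of_not_reach
          intro hr
          have := ((S N).iff _ _).2 hr
          rw [a1 _ u rfl, a1 _ v rfl] at this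
          exact hl this
  have hPsP : ∀ i G, Ps i G → P G := by
    rintro i G ⟨hn, n, f, h1, h2, _⟩
    exact mono hh (S n).star.1.1 f h1 h2 hn
  refine ⟨Ps, fun i => ⟨hPsG i, hPsC i, ?_⟩, hprod, ?_⟩
  · -- indecomposability
    have hbi : BddAbove {r : ℕ | Ps i ⟨Fin r, (⊤ : SimpleGraph (Fin r))⟩} :=
      hb.mono (fun r hr => hPsP i _ hr)
    obtain ⟨_, n, hc⟩ := c_mem (hPsG i) (hPsHer i) hbi
    have hcard : cNum (Ps i) ≤ Fintype.card (K i n).V := by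
      obtain ⟨φ, hφ⟩ := hQK _ _ _ hc
      have := Fintype.card_le_of_injective φ hφ
      simpa using this
    have hmax : PMaximal (Ps i) (K i n) := by
      refine ⟨hK i n, ?_⟩
      rintro ⟨a, ha⟩ ⟨b, hb'⟩ hab hnadj hPs
      have hab' : a ≠ b := fun h => hab (Subtype.ext h)
      refine (S n).star.1.2 a b hab' hnadj ?_
      refine (congrFun hprod _).mpr ?_
      refine ⟨⟨a⟩, (S n).lab, fun j hj => ?_⟩
      by_cases hji : j = i
      · subst hji
        refine mono (hPsHer j) hPs (fun v => ⟨v.1, v.2⟩) ?_ ?_ hj.to_subtype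
        · intro u v h
          exact Subtype.ext (congrArg Subtype.val h)
        · intro u v h
          have h' := (addEdge_adj (S n).H a b u.1 v.1).1 h
          refine (addEdge_adj _ _ _ _ _).2 ?_
          rcases h' with h' | ⟨h', hne⟩
          · exact Or.inl h'
          · refine Or.inr ⟨?_, fun hq => hne (congrArg Subtype.val hq)⟩
            rcases h' with ⟨e1, e2⟩ | ⟨e1, e2⟩
            · exact Or.inl ⟨Subtype.ext e1, Subtype.ext e2⟩
            · exact Or.inr ⟨Subtype.ext e1, Subtype.ext e2⟩
      · refine ⟨hj.to_subtype, n, fun v => v.1, Subtype.val_injective, ?_, fun v => v.2⟩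
        intro u v h
        have h' := (addEdge_adj (S n).H a b u.1 v.1).1 h
        have hu : (S n).lab u.1 = j := u.2
        have hv : (S n).lab v.1 = j := v.2
        have ha' : (S n).lab a = i := ha
        rcases h' with h' | ⟨⟨e1, _⟩ | ⟨e1, _⟩, _⟩
        · exact h'
        · rw [← e1, ha'] at hu
          exact absurd hu.symm hji
        · rw [← e1, ha'] at hv
          exact absurd hv.symm hji
    have hstar : PMaxStar (Ps i) (K i n) := ⟨hmax, hcard⟩
    have hdc : dc (K i n) = 1 := by
      have hwalk : ∀ u v, (S n).H.graphᶜ.Walk u v → ∀ (hu : (S n).lab u = i)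
          (hv : (S n).lab v = i), (K i n).graphᶜ.Reachable ⟨u, hu⟩ ⟨v, hv⟩ := by
        intro u v w
        induction w with
        | nil => intro hu hv; exact SimpleGraph.Reachable.refl _
        | @cons u x v hadj w ih =>
          intro hu hv
          have hx : (S n).lab x = i := (((S n).iff u x).2 hadj.reachable).symm.trans hu
          refine SimpleGraph.Reachable.trans (SimpleGraph.Adj.reachable ?_) (ih hx hv)
          rw [SimpleGraph.compl_adj] at hadj
          refine (SimpleGraph.compl_adj _ _ _).2 ?_
          exact ⟨fun h => hadj.1 (congrArg Subtype.val h), fun h => hadj.2 h⟩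
      unfold dc
      rw [Fintype.card_eq_one_iff]
      obtain ⟨x⟩ := hKn i n
      refine ⟨(K i n).graphᶜ.connectedComponentMk x, fun c => ?_⟩
      induction c using SimpleGraph.ConnectedComponent.ind with
      | h y =>
        obtain ⟨w⟩ := ((S n).iff y.1 x.1).1 (y.2.trans x.2.symm)
        exact SimpleGraph.ConnectedComponent.sound (hwalk _ _ w y.2 x.2)
    apply le_antisymm
    · rw [← hdc]; exact dcP_le hstar
    · obtain ⟨G, hG, hd⟩ := Nat.sInf_mem
        (s := {m : ℕ | ∃ G, PMaxStar (Ps i) G ∧ dc G = m}) ⟨_, _, hstar, rfl⟩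
      have hd' : dc G = dcP (Ps i) := hd
      rw [← hd']
      obtain ⟨x⟩ := hG.1.1.1
      exact Fintype.card_pos_iff.2 ⟨G.graphᶜ.connectedComponentMk x⟩
  · rintro hadd i G H ⟨⟨x⟩, n, hn⟩ ⟨_, m, hm⟩
    obtain ⟨p, p1, p2, p3⟩ := hQmono _ _ _ _ (le_max_left n m) hn
    obtain ⟨q, q1, q2, q3⟩ := hQmono _ _ _ _ (le_max_right n m) hm
    obtain ⟨f, f', ⟨a1, a2, a3⟩, ⟨b1, b2, b3⟩, hdis⟩ := hS3 hadd (max n m)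
    refine ⟨⟨Sum.inl x⟩, max n m + 1, Sum.elim (fun v => f (p v)) (fun v => f' (q v)), ?_, ?_, ?_⟩
    · rintro (u | u) (v | v) h
      · exact congrArg Sum.inl (p1 (a1 h))
      · exact absurd h (hdis _ _)
      · exact absurd h.symm (hdis _ _)
      · exact congrArg Sum.inr (q1 (b1 h))
    · rintro (u | u) (v | v) h
      · exact a2 _ _ (p2 _ _ (by simpa [FGraph.disjUnion] using h))
      · simp [FGraph.disjUnion] at h
      · simp [FGraph.disjUnion] at h
      · exact b2 _ _ (q2 _ _ (by simpa [FGraph.disjUnion] using h))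
    · rintro (v | v)
      · exact (a3 _).trans (p3 v)
      · exact (b3 _).trans (q3 v)

end S17

/-- a hereditary compositive graph property `P` not containing
all graphs is the product of `d = dc(P)` indecomposable hereditary compositive
graph properties; moreover, if `P` is additive the factors can be chosen to be
additive as well. -/
theorem statement_17 (P : GProp) (hP : IsGProp P) (hcomp : HerCompositive P)
    (hnotall : ¬ ∀ G : FGraph, Nonempty G.V → P G) :
    (∃ Ps : Fin (dcP P) → GProp,
      (∀ i, IsGProp (Ps i) ∧ HerCompositive (Ps i) ∧ dcP (Ps i) = 1) ∧
      P = GProp.iProd Ps) ∧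
    (AdditiveProp P →
      ∃ Ps : Fin (dcP P) → GProp,
        (∀ i, IsGProp (Ps i) ∧ HerCompositive (Ps i) ∧ AdditiveProp (Ps i) ∧
          dcP (Ps i) = 1) ∧
        P = GProp.iProd Ps) := by
  obtain ⟨Ps, h1, h2, h3⟩ := S17.main P hP hcomp hnotall
  exact ⟨⟨Ps, h1, h2⟩, fun ha => ⟨Ps, fun i => ⟨(h1 i).1, (h1 i).2.1, h3 ha i, (h1 i).2.2⟩, h2⟩⟩
end
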